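/- For every n ≥ 1, the thickness of the complete 4-partite graph K_{1,1,n,n} equals ⌈(n+3)/4⌉. -/

import Mathlib

open SimpleGraph

/-- A simple graph is planar if it admits a drawing in the plane: an injective
placement of vertices and, for each edge, an injective continuous arc joining
the images of its endpoints, such that arcs avoid vertex images in their
interiors and distinct arcs meet only at vertex images. -/
def IsPlanar {V : Type*} (G : SimpleGraph V) : Prop :=
  ∃ (f : V → ℝ × ℝ) (γ : G.edgeSet → (Set.Icc (0:ℝ) 1 → ℝ × ℝ)),
    Function.Injective f ∧
    (∀ e : G.edgeSet, Continuous (γ e)) ∧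
    (∀ e : G.edgeSet, ∃ u v : V, (e : Sym2 V) = s(u, v) ∧
      γ e ⟨0, by norm_num⟩ = f u ∧ γ e ⟨1, by norm_num⟩ = f v) ∧
    (∀ e : G.edgeSet, Function.Injective (γ e)) ∧
    (∀ e : G.edgeSet, ∀ t : Set.Icc (0:ℝ) 1, (t : ℝ) ≠ 0 → (t : ℝ) ≠ 1 →
      ∀ v : V, γ e t ≠ f v) ∧
    (∀ e e' : G.edgeSet, e ≠ e' → ∀ s t : Set.Icc (0:ℝ) 1,
      γ e s = γ e' t → γ e s ∈ Set.range f)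

/-- The thickness of a graph: the least `n` such that `G` is the union of `n`
planar subgraphs. -/
noncomputable def thickness {V : Type*} (G : SimpleGraph V) : ℕ :=
  sInf {n : ℕ | ∃ H : Fin n → SimpleGraph V,
    (∀ i, H i ≤ G) ∧ (∀ i, IsPlanar (H i)) ∧ (⨆ i, H i) = G}

/-!
Lower bound: a planar triangle-free graph on `m ≥ 3` vertices has at most `2 * m - 4` edges, and
`K_{1,1,n,n}` contains `K_{n+1,n+1}`, which has `(n + 1) ^ 2` edges on `2 * n + 2` vertices. The
edge bound does not rely on the Jordan curve theorem. The closed pieces of a drawing are separated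
by positive distances, so that in a sufficiently fine square grid they become disjoint connected
sets of vertices; the graph is therefore a minor of the grid. Whitney duals, in which bonds become
cycles, exist for grids and pass to minors, and a Whitney dual gives the edge bound by counting.

Upper bound: for `n ≤ 4 * p + 1` the edges of `K_{1,1,n,n}` are distributed over `p + 1` graphs with
explicit two-page book embeddings. In each of the first `p` graphs, all but at most five of the `n`
vertices of either large part lie in two stacks of vertices with a common neighbourhood; the last
graph collects the remaining edges.
-/

section Homology

variable {V E F M : Type*}

/-- The sum of the values of `c` at the two ends of an edge. Over `ZMod 2` this is the coboundary
of the vertex function `c`; it vanishes on loops. -/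
def endSum [AddCommMonoid M] (c : V → M) : Sym2 V → M :=
  Sym2.lift ⟨fun u v => c u + c v, fun _ _ => add_comm _ _⟩

@[simp]
lemma endSum_mk [AddCommMonoid M] (c : V → M) (u v : V) : endSum c s(u, v) = c u + c v := rfl

/-- The mod 2 boundary map from edges to vertices of the multigraph on `V` whose edge `e : E` has
the ends `ends e`. -/
noncomputable def boundary (ends : E → Sym2 V) : (E →₀ ZMod 2) →ₗ[ZMod 2] (V →₀ ZMod 2) :=
  Finsupp.linearCombination (ZMod 2) fun e => endSum (Finsupp.single · 1) (ends e)

/-- `faces` exhibits a Whitney dual of the multigraph `ends`: assigning to each edge the two faces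
on its sides, the cycles are exactly the coboundaries of the functions on faces. -/
def IsWhitneyDual (ends : E → Sym2 V) (faces : E → Sym2 F) : Prop :=
  ∀ z : E →₀ ZMod 2, boundary ends z = 0 ↔ ∃ c : F → ZMod 2, ∀ e, z e = endSum c (faces e)

variable {ends : E → Sym2 V} {faces : E → Sym2 F}

lemma boundary_single (ends : E → Sym2 V) (e : E) :
    boundary ends (Finsupp.single e 1) = endSum (Finsupp.single · 1) (ends e) := by
  simp [boundary]

lemma linearCombination_boundary [AddCommGroup M] [Module (ZMod 2) M] (c : V → M)
    (z : E →₀ ZMod 2) :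
    Finsupp.linearCombination (ZMod 2) c (boundary ends z) =
      Finsupp.linearCombination (ZMod 2) (fun e => endSum c (ends e)) z := by
  suffices h : Finsupp.linearCombination (ZMod 2) c ∘ₗ boundary ends =
      Finsupp.linearCombination (ZMod 2) (fun e => endSum c (ends e)) from congr($h z)
  ext e
  induction h : ends e with | _ u v => simp [boundary_single, h]

lemma endSum_const (a : ZMod 2) (p : Sym2 V) : endSum (fun _ => a) p = 0 := by
  induction p with | _ => exact CharTwo.add_self_eq_zero a

lemma endSum_single_of_notMem [DecidableEq V] {v : V} {p : Sym2 V} (hv : v ∉ p) :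
    endSum (Pi.single v (1 : ZMod 2)) p = 0 := by
  induction p with | _ a b => simp_all [eq_comm]

lemma range_boundary_lt_top [Nonempty V] (ends : E → Sym2 V) :
    LinearMap.range (boundary ends) < ⊤ := by
  obtain ⟨v⟩ := ‹Nonempty V›
  refine lt_top_iff_ne_top.2 fun h => ?_
  obtain ⟨z, hz⟩ := LinearMap.range_eq_top.1 h (Finsupp.single v 1)
  have := linearCombination_boundary (ends := ends) (fun _ => (1 : ZMod 2)) z
  simp [hz, endSum_const, Finsupp.linearCombination_apply] at this

lemma card_edges_lt_card_add_finrank_ker [Fintype E] [Fintype V] [Nonempty V]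
    (ends : E → Sym2 V) :
    Fintype.card E < Fintype.card V + Module.finrank (ZMod 2) (LinearMap.ker (boundary ends)) := by
  have hrange := Submodule.finrank_lt (range_boundary_lt_top ends).ne
  have hrank := LinearMap.finrank_range_add_finrank_ker (boundary ends)
  simp only [Module.finrank_finsupp_self] at hrange hrank
  lia

/-- The edges with exactly one side on the face `C`, as a mod 2 chain. -/
noncomputable def faceChain [Finite E] (faces : E → Sym2 F) (C : F) : E →₀ ZMod 2 :=
  open Classical in Finsupp.equivFunOnFinite.symm fun e => endSum (Pi.single C 1) (faces e)

lemma faceChain_apply [Finite E] [DecidableEq F] (faces : E → Sym2 F) (C : F) (e : E) :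
    faceChain faces C e = endSum (Pi.single C 1) (faces e) := by
  simp only [faceChain, Finsupp.equivFunOnFinite_symm_apply_apply]
  congr!

lemma mem_of_faceChain_ne_zero [Finite E] {C : F} {e : E} (h : faceChain faces C e ≠ 0) :
    C ∈ faces e := by
  classical
  rw [faceChain_apply] at h
  exact not_imp_comm.1 endSum_single_of_notMem h

lemma card_faces_of_edge_le_two [Finite E] (T : Finset F) (e : E)
    [DecidablePred fun C => faceChain faces C e ≠ 0] :
    (T.filter fun C => faceChain faces C e ≠ 0).card ≤ 2 := by
  classical
  calc (T.filter fun C => faceChain faces C e ≠ 0).card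
      ≤ (faces e).toFinset.card := Finset.card_le_card fun C hC =>
        Sym2.mem_toFinset.2 (mem_of_faceChain_ne_zero (Finset.mem_filter.1 hC).2)
    _ ≤ 2 := by rw [Sym2.card_toFinset]; split_ifs <;> simp

lemma finite_support_faceChain [Finite E] (faces : E → Sym2 F) :
    (Function.support (faceChain faces)).Finite := by
  classical
  refine (Set.finite_iUnion fun e => (faces e).toFinset.finite_toSet).subset fun C hC => ?_
  obtain ⟨e, he⟩ := Finsupp.ne_iff.1 hC
  exact Set.mem_iUnion.2 ⟨e, Sym2.mem_toFinset.2 (mem_of_faceChain_ne_zero he)⟩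

/-- The faces whose boundary chain does not vanish. -/
noncomputable def properFaces [Finite E] (faces : E → Sym2 F) : Finset F :=
  (finite_support_faceChain faces).toFinset

lemma mem_properFaces [Finite E] {C : F} : C ∈ properFaces faces ↔ faceChain faces C ≠ 0 :=
  Set.Finite.mem_toFinset _

lemma sum_faceChain_apply [Finite E] (faces : E → Sym2 F) (c : F → ZMod 2) (e : E) :
    (∑ C ∈ properFaces faces, c C • faceChain faces C) e = endSum c (faces e) := by
  classical
  have hextend : ∑ C ∈ properFaces faces, c C • faceChain faces C =
      ∑ C ∈ properFaces faces ∪ (faces e).toFinset, c C • faceChain faces C :=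
    Finset.sum_subset Finset.subset_union_left fun C _ hC => by
      rw [not_not.1 (mt mem_properFaces.2 hC), smul_zero]
  simp only [hextend, Finsupp.finsetSum_apply, Finsupp.smul_apply, faceChain_apply]
  induction faces e with | _ a b =>
  simp [Pi.single_apply, mul_add, Finset.sum_add_distrib]

lemma IsWhitneyDual.boundary_faceChain [Finite E] (h : IsWhitneyDual ends faces) (C : F) :
    boundary ends (faceChain faces C) = 0 := by
  classical exact (h _).2 ⟨Pi.single C 1, faceChain_apply faces C⟩

lemma IsWhitneyDual.ker_boundary_le_span [Finite E] (h : IsWhitneyDual ends faces) {C₀ : F} :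
    LinearMap.ker (boundary ends) ≤
      Submodule.span (ZMod 2) (faceChain faces '' (properFaces faces \ {C₀})) := by
  intro z hz
  obtain ⟨c, hc⟩ := (h z).1 hz
  -- Adding a constant to `c` does not change its coboundary, so we may assume `c C₀ = 0`.
  have hsum : z = ∑ C ∈ properFaces faces, (c C + c C₀) • faceChain faces C := by
    ext e
    rw [sum_faceChain_apply, hc]
    induction faces e with | _ a b =>
    simp only [endSum_mk]
    linear_combination -CharTwo.add_self_eq_zero (c C₀)
  rw [hsum]
  refine Submodule.sum_mem _ fun C hC => ?_
  obtain rfl | hne := eq_or_ne C C₀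
  · simp [CharTwo.add_self_eq_zero]
  · exact Submodule.smul_mem _ _ (Submodule.subset_span ⟨C, ⟨hC, hne⟩, rfl⟩)

lemma IsWhitneyDual.finrank_ker_boundary_lt [Finite E] (h : IsWhitneyDual ends faces)
    (hT : (properFaces faces).Nonempty) :
    Module.finrank (ZMod 2) (LinearMap.ker (boundary ends)) < (properFaces faces).card := by
  classical
  obtain ⟨C₀, hC₀⟩ := hT
  calc Module.finrank (ZMod 2) (LinearMap.ker (boundary ends))
      ≤ Module.finrank (ZMod 2) (Submodule.span (ZMod 2)
          (((properFaces faces).erase C₀).image (faceChain faces) : Set (E →₀ ZMod 2))) := by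
        refine Submodule.finrank_mono ?_
        simpa using h.ker_boundary_le_span
    _ ≤ (((properFaces faces).erase C₀).image (faceChain faces)).card :=
        finrank_span_finset_le_card _
    _ ≤ ((properFaces faces).erase C₀).card := Finset.card_image_le
    _ < (properFaces faces).card := Finset.card_erase_lt_of_mem hC₀

theorem IsWhitneyDual.card_edges_le_of_girth [Fintype E] [Fintype V] [Nonempty V]
    (h : IsWhitneyDual ends faces) {g : ℕ}
    (hgirth : ∀ z, boundary ends z = 0 → z ≠ 0 → g ≤ z.support.card)
    (hcycle : LinearMap.ker (boundary ends) ≠ ⊥) :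
    g * (Fintype.card E + 2) ≤ 2 * Fintype.card E + g * Fintype.card V := by
  classical
  have hT : (properFaces faces).Nonempty := by
    rw [Finset.nonempty_iff_ne_empty]
    refine fun h0 => hcycle (eq_bot_iff.2 fun z hz => ?_)
    obtain ⟨c, hc⟩ := (h z).1 hz
    ext e
    simp [hc e, ← sum_faceChain_apply, h0]
  have hcount : (properFaces faces).card * g ≤ (Finset.univ : Finset E).card * 2 := by
    refine Finset.card_mul_le_card_mul (fun C e => faceChain faces C e ≠ 0) (fun C hC => ?_)
      fun e _ => card_faces_of_edge_le_two _ e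
    convert hgirth _ (h.boundary_faceChain C) (mem_properFaces.1 hC) using 2
    ext e
    simp [Finset.bipartiteAbove]
  have hedges := card_edges_lt_card_add_finrank_ker ends
  have hfaces := h.finrank_ker_boundary_lt hT
  rw [Finset.card_univ] at hcount
  calc g * (Fintype.card E + 2)
      ≤ g * (Fintype.card V + (properFaces faces).card) := Nat.mul_le_mul_left g (by lia)
    _ = (properFaces faces).card * g + g * Fintype.card V := by ring
    _ ≤ 2 * Fintype.card E + g * Fintype.card V := by lia

end Homology

section TriangleFree

variable {V E : Type*}

/-- The multigraph `ends` has a Whitney dual on some set of faces. -/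
def HasWhitneyDual (ends : E → Sym2 V) : Prop :=
  ∃ (F : Type) (faces : E → Sym2 F), IsWhitneyDual ends faces

lemma exists_ne_mem_support_of_boundary_eq_zero {ends : E → Sym2 V} {z : E →₀ ZMod 2}
    (hz : boundary ends z = 0) {e : E} (he : e ∈ z.support) {v : V} (hv : v ∈ ends e)
    (hloop : ¬ (ends e).IsDiag) : ∃ e' ∈ z.support, e' ≠ e ∧ v ∈ ends e' := by
  classical
  by_contra! hno
  have hdeg := linearCombination_boundary (ends := ends) (Pi.single v (1 : ZMod 2)) z
  rw [hz, map_zero, Finsupp.linearCombination_apply, Finsupp.sum,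
    Finset.sum_eq_single_of_mem e he] at hdeg
  · obtain ⟨w, hw⟩ := hv
    have hwv : w ≠ v := by simpa [hw, eq_comm] using hloop
    have hze : z e = 0 := by simpa [hw, hwv] using hdeg.symm
    exact Finsupp.mem_support_iff.1 he hze
  · intro e' he' hne
    rw [endSum_single_of_notMem (hno e' he' hne), smul_zero]

lemma four_le_card_support_of_boundary_eq_zero {G : SimpleGraph V} (hG : G.CliqueFree 3)
    {z : G.edgeSet →₀ ZMod 2} (hz : boundary Subtype.val z = 0) (hz0 : z ≠ 0) :
    4 ≤ z.support.card := by
  classical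
  have hother {e : G.edgeSet} (he : e ∈ z.support) {v : V} (hv : v ∈ e.1) :=
    exists_ne_mem_support_of_boundary_eq_zero hz he hv (G.not_isDiag_of_mem_edgeSet e.2)
  obtain ⟨⟨e₀, he₀G⟩, he₀⟩ := Finsupp.support_nonempty_iff.2 hz0
  induction e₀ with | _ u v =>
  obtain ⟨⟨_, huw⟩, he₁, hne₁, w, rfl⟩ := hother he₀ (Sym2.mem_mk_left u v)
  obtain ⟨⟨_, hvx⟩, he₂, hne₂, x, rfl⟩ := hother he₀ (Sym2.mem_mk_right u v)
  obtain ⟨⟨_, hwy⟩, he₃, hne₃, y, rfl⟩ := hother he₁ (Sym2.mem_mk_right u w)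
  rw [mem_edgeSet] at he₀G huw hvx hwy
  have hvw : ¬ G.Adj v w := fun h => hG _ (is3Clique_triple_iff.2 ⟨he₀G, huw, h⟩)
  refine Finset.three_lt_card.2 ⟨_, he₀, _, he₁, _, he₂, _, he₃, ?_⟩
  have := he₀G.ne; have := huw.ne; have := hvx.ne; have := hwy.ne
  simp only [ne_eq, Subtype.mk.injEq, Sym2.eq_iff] at *
  grind [G.adj_comm]

theorem HasWhitneyDual.card_edgeSet_add_four_le [Finite V] {G : SimpleGraph V}
    (h : HasWhitneyDual (Subtype.val : G.edgeSet → Sym2 V)) (hG : G.CliqueFree 3)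
    (hV : 3 ≤ Nat.card V) : Nat.card G.edgeSet + 4 ≤ 2 * Nat.card V := by
  obtain ⟨F, faces, h⟩ := h
  have := Fintype.ofFinite V
  have := Fintype.ofFinite G.edgeSet
  rw [Nat.card_eq_fintype_card, Nat.card_eq_fintype_card] at *
  have : Nonempty V := Fintype.card_pos_iff.1 (by lia)
  by_cases hcycle : LinearMap.ker (boundary (Subtype.val : G.edgeSet → Sym2 V)) = ⊥
  · have hforest := card_edges_lt_card_add_finrank_ker (Subtype.val : G.edgeSet → Sym2 V)
    rw [hcycle, finrank_bot] at hforest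
    lia
  · have := h.card_edges_le_of_girth
      (fun z hz hz0 => four_le_card_support_of_boundary_eq_zero hG hz hz0) hcycle
    lia

end TriangleFree

section Grid

/-- The edges of the grid on `ℤ × ℤ`: `(q, true)` goes from `q` to the right, `(q, false)` up. -/
abbrev GridEdge : Type := (ℤ × ℤ) × Bool

/-- The unit vector along the horizontal (`true`) or vertical (`false`) grid edges. -/
def gridStep : Bool → ℤ × ℤ
  | true => (1, 0)
  | false => (0, 1)

/-- The grid on `ℤ × ℤ` as a multigraph. -/
def gridEnds (e : GridEdge) : Sym2 (ℤ × ℤ) := s(e.1, e.1 + gridStep e.2)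

/-- The two unit squares on the sides of a grid edge, a square being named by its lower left
corner. -/
def gridFaces (e : GridEdge) : Sym2 (ℤ × ℤ) := s(e.1 - gridStep !e.2, e.1)

lemma boundary_gridEnds_apply (z : GridEdge →₀ ZMod 2) (x y : ℤ) :
    boundary gridEnds z (x, y) =
      z ((x, y), true) + z ((x - 1, y), true) + z ((x, y), false) + z ((x, y - 1), false) := by
  induction z using Finsupp.induction_linear with
  | zero => simp
  | add z w hz hw => simp only [map_add, Finsupp.add_apply, hz, hw]; ring
  | single e a =>
    obtain ⟨⟨i, j⟩, d⟩ := e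
    rw [← mul_one a, ← smul_eq_mul, ← Finsupp.smul_single, map_smul, boundary_single]
    cases d <;> simp [gridEnds, gridStep, Finsupp.single_apply, eq_sub_iff_add_eq]

lemma exists_forall_fst_le_eq_zero (z : GridEdge →₀ ZMod 2) :
    ∃ N : ℤ, ∀ x ≤ N, ∀ y d, z ((x, y), d) = 0 := by
  obtain ⟨M, hM⟩ := (z.support.image fun e => e.1.1).bddBelow
  refine ⟨M - 1, fun x hx y d => ?_⟩
  by_contra hz
  have : M ≤ x := hM (Finset.mem_image.2 ⟨_, Finsupp.mem_support_iff.2 hz, rfl⟩)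
  lia

/-- The parity of the number of edges of `z` crossed by the horizontal half-line running from the
square `q` to the left. -/
noncomputable def gridPotential (z : GridEdge →₀ ZMod 2) (q : ℤ × ℤ) : ZMod 2 :=
  ∑ᶠ i ∈ Set.Iic q.1, z ((i, q.2), false)

lemma gridPotential_apply (z : GridEdge →₀ ZMod 2) (x y : ℤ) :
    gridPotential z (x, y) = z ((x, y), false) + gridPotential z (x - 1, y) := by
  have hinj : Function.Injective fun i : ℤ => (((i, y), false) : GridEdge) :=
    fun i j h => congr(($h).1.1)
  rw [gridPotential, ← Set.Iio_insert, ← Set.Iic_sub_one_eq_Iio, finsum_mem_insert' _ (by simp)]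
  · rfl
  · exact (z.hasFiniteSupport.preimage hinj.injOn).inter_of_right _

lemma gridPotential_vertical (z : GridEdge →₀ ZMod 2) (x y : ℤ) :
    z ((x, y), false) = endSum (gridPotential z) (gridFaces ((x, y), false)) := by
  simp only [gridFaces, gridStep, Bool.not_false, Prod.mk_sub_mk, sub_zero, endSum_mk,
    gridPotential_apply z x y]
  linear_combination -CharTwo.add_self_eq_zero (gridPotential z (x - 1, y))

lemma gridPotential_horizontal {z : GridEdge →₀ ZMod 2} (hz : boundary gridEnds z = 0) (x y : ℤ) :
    z ((x, y), true) = endSum (gridPotential z) (gridFaces ((x, y), true)) := by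
  obtain ⟨N, hN⟩ := exists_forall_fst_le_eq_zero z
  let defect (x : ℤ) := gridPotential z (x, y) + gridPotential z (x, y - 1) + z ((x, y), true)
  have hleft : ∀ x ≤ N, defect x = 0 := fun x hx => by
    have hpot (y) : gridPotential z (x, y) = 0 :=
      finsum_mem_of_eqOn_zero fun i hi => hN i (le_trans hi hx) y false
    simp only [defect, hpot, hN x hx, add_zero]
  have hstep (x) : defect x = defect (x - 1) := by
    have hvertex := boundary_gridEnds_apply z x y
    rw [hz, Finsupp.zero_apply] at hvertex
    simp only [defect, gridPotential_apply z x]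
    linear_combination -hvertex - CharTwo.add_self_eq_zero (z ((x - 1, y), true))
  have hdefect : defect x = 0 := by
    obtain hx | hx := le_total x N
    · exact hleft x hx
    · induction x, hx using Int.leInduction with
      | base => exact hleft N le_rfl
      | succ x _ ih => simpa [hstep (x + 1)] using ih
  simp only [gridFaces, gridStep, Bool.not_true, Prod.mk_sub_mk, sub_zero, endSum_mk]
  exact CharTwo.add_eq_zero.1 (by linear_combination hdefect)

theorem isWhitneyDual_grid : IsWhitneyDual gridEnds gridFaces := by
  refine fun z => ⟨fun hz => ⟨gridPotential z, ?_⟩, fun ⟨c, hc⟩ => ?_⟩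
  · rintro ⟨⟨x, y⟩, _ | _⟩
    exacts [gridPotential_vertical z x y, gridPotential_horizontal hz x y]
  · ext ⟨x, y⟩
    simp only [boundary_gridEnds_apply, hc, gridFaces, gridStep, Bool.not_true, Bool.not_false,
      Prod.mk_sub_mk, sub_zero, endSum_mk, Finsupp.zero_apply]
    linear_combination CharTwo.add_self_eq_zero
      (c (x, y) + c (x - 1, y) + c (x, y - 1) + c (x - 1, y - 1))

end Grid

section Minor

variable {V V' W E E' F' : Type*}

lemma mapDomain_boundary (f : V → W) (ends : E → Sym2 V) (z : E →₀ ZMod 2) :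
    Finsupp.mapDomain f (boundary ends z) = boundary (Sym2.map f ∘ ends) z := by
  suffices h : Finsupp.lmapDomain (ZMod 2) (ZMod 2) f ∘ₗ boundary ends =
      boundary (Sym2.map f ∘ ends) from congr($h z)
  ext1 e
  ext1
  induction h : ends e with | _ u v =>
  simp [boundary_single, h, Finsupp.mapDomain_add]

lemma boundary_mapDomain (f : E → E') (ends : E' → Sym2 V) (z : E →₀ ZMod 2) :
    boundary ends (Finsupp.mapDomain f z) = boundary (ends ∘ f) z :=
  Finsupp.linearCombination_mapDomain _ f z

lemma boundary_eq_zero_of_isDiag {ends : E → Sym2 V} {z : E →₀ ZMod 2}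
    (h : ∀ e ∈ z.support, (ends e).IsDiag) : boundary ends z = 0 := by
  refine Finset.sum_eq_zero fun e he => ?_
  have hloop := h e he
  induction hends : ends e with | _ u v =>
  obtain rfl : u = v := by simpa [hends] using hloop
  simp [hends, ZModModule.add_self]

/-- The simple graph underlying the multigraph `ends`. -/
def edgeGraph (ends : E → Sym2 V) : SimpleGraph V := fromEdgeSet (Set.range ends)

lemma exists_chain_of_reachable {ends : E → Sym2 V} {S : Set V} {p q : S}
    (h : ((edgeGraph ends).induce S).Reachable p q) :
    ∃ z : E →₀ ZMod 2, boundary ends z = Finsupp.single p.1 1 + Finsupp.single q.1 1 ∧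
      ∀ e ∈ z.support, ∀ v ∈ ends e, v ∈ S := by
  classical
  obtain ⟨walk⟩ := h
  induction walk with
  | nil => exact ⟨0, by rw [map_zero, ZModModule.add_self], by simp⟩
  | @cons p r q hadj _ ih =>
    obtain ⟨z, hz, hzS⟩ := ih
    obtain ⟨⟨e, he⟩, -⟩ := hadj
    refine ⟨Finsupp.single e 1 + z, ?_, fun e' he' => ?_⟩
    · rw [map_add, boundary_single, he, hz, endSum_mk]
      exact ZModModule.add_add_add_cancel _ _ _
    · obtain he' | he' := Finset.mem_union.1 (Finsupp.support_add he')
      · obtain rfl := Finset.mem_singleton.1 (Finsupp.support_single_subset he')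
        simp [he]
      · exact hzS e' he'

/-- A realization of the multigraph `ends` as a minor of the multigraph `ends'`. The vertex `v` is
obtained by contracting its branch set, which consists of the vertices labelled `some v`; the
vertices labelled `none` are deleted. -/
structure MinorModel (ends : E → Sym2 V) (ends' : E' → Sym2 V') where
  label : V' → Option V
  edge : E → E'
  edge_injective : Function.Injective edge
  map_label_edge : ∀ e, (ends' (edge e)).map label = (ends e).map some
  finite_branch : ∀ v, {x | label x = some v}.Finite
  connected_branch : ∀ v, ((edgeGraph ends').induce {x | label x = some v}).Connected

namespace MinorModel

variable {ends : E → Sym2 V} {ends' : E' → Sym2 V'} (m : MinorModel ends ends')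

/-- The edges of the host that lie inside a branch set. -/
def IsContracted (g : E') : Prop := ∃ v, (ends' g).map m.label = Sym2.diag (some v)

/-- The edges of the host that neither are contracted nor survive in the minor. -/
def IsDeleted (g : E') : Prop := ¬ m.IsContracted g ∧ g ∉ Set.range m.edge

/-- Deleting an edge of the host merges the two faces on its sides. -/
def Merged (faces' : E' → Sym2 F') (C D : F') : Prop := ∃ g, m.IsDeleted g ∧ faces' g = s(C, D)

/-- The faces of the minor on the sides of its edges, as classes of merged faces of the host. -/
def faces (faces' : E' → Sym2 F') (e : E) : Sym2 (Quot (m.Merged faces')) :=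
  (faces' (m.edge e)).map (Quot.mk _)

lemma not_isContracted_edge {e : E} (he : ¬ (ends e).IsDiag) : ¬ m.IsContracted (m.edge e) := by
  rintro ⟨v, hv⟩
  rw [map_label_edge] at hv
  induction h : ends e with | _ a b =>
  simp_all [Sym2.diag]

lemma finite_isContracted [Finite V] (hfin : ∀ x, {g | x ∈ ends' g}.Finite) :
    {g | m.IsContracted g}.Finite := by
  refine (Set.finite_iUnion fun v => (m.finite_branch v).biUnion fun x _ => hfin x).subset ?_
  rintro g ⟨v, hv⟩
  induction h : ends' g with | _ x y =>
  simp only [h, Sym2.diag, Sym2.map_mk, Sym2.eq_iff, or_self] at hv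
  simp only [Set.mem_iUnion]
  exact ⟨v, x, hv.1, by simp [h]⟩

lemma boundary_eq_zero_of_cycle_lift {z : E →₀ ZMod 2} {w : E' →₀ ZMod 2}
    (hw : boundary ends' w = 0)
    (hwz : ∀ g, ¬ m.IsContracted g → w g = Finsupp.mapDomain m.edge z g) :
    boundary ends z = 0 := by
  have hinner : boundary (Sym2.map m.label ∘ ends') (w - Finsupp.mapDomain m.edge z) = 0 := by
    refine boundary_eq_zero_of_isDiag fun g hg => ?_
    have : m.IsContracted g := by
      by_contra hcon
      exact Finsupp.mem_support_iff.1 hg (sub_eq_zero.2 (hwz g hcon))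
    obtain ⟨v, hv⟩ := this
    simp [hv]
  have hedge : Sym2.map m.label ∘ ends' ∘ m.edge = Sym2.map some ∘ ends :=
    funext m.map_label_edge
  rw [map_sub, ← mapDomain_boundary, hw, Finsupp.mapDomain_zero, zero_sub, neg_eq_zero,
    boundary_mapDomain, Function.comp_assoc, hedge, ← mapDomain_boundary] at hinner
  exact Finsupp.mapDomain_injective (Option.some_injective V) (by simpa using hinner)

lemma exists_chain_to_base {v : V} {x b : V'} (hx : m.label x = some v) (hb : m.label b = some v) :
    ∃ w : E' →₀ ZMod 2, boundary ends' w = Finsupp.single x 1 + Finsupp.single b 1 ∧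
      ∀ g, ¬ m.IsContracted g → w g = 0 := by
  obtain ⟨w, hw, hsupp⟩ := exists_chain_of_reachable
    ((m.connected_branch v).preconnected ⟨x, hx⟩ ⟨b, hb⟩)
  refine ⟨w, hw, fun g hg => ?_⟩
  by_contra hwg
  refine hg ⟨v, ?_⟩
  have := hsupp g (Finsupp.mem_support_iff.2 hwg)
  induction h : ends' g with | _ x y =>
  simp_all [Sym2.diag]

lemma exists_edge_lift {base : V → V'} (hbase : ∀ v, m.label (base v) = some v) (e : E) :
    ∃ w : E' →₀ ZMod 2, boundary ends' w = Finsupp.mapDomain base (boundary ends (.single e 1)) ∧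
      ∀ g, ¬ m.IsContracted g → w g = Finsupp.single (m.edge e) 1 g := by
  have hlabel := m.map_label_edge e
  rw [mapDomain_boundary, boundary_single, Function.comp_apply]
  obtain ⟨x, y, u, v, hg, he, hx, hy⟩ : ∃ x y u v, ends' (m.edge e) = s(x, y) ∧ ends e = s(u, v) ∧
      m.label x = some u ∧ m.label y = some v := by
    induction hg : ends' (m.edge e) with | _ x y =>
    induction he : ends e with | _ u v =>
    rw [hg, he] at hlabel
    obtain ⟨hx, hy⟩ | ⟨hx, hy⟩ := Sym2.eq_iff.1 hlabel
    exacts [⟨x, y, u, v, rfl, rfl, hx, hy⟩, ⟨x, y, v, u, rfl, Sym2.eq_swap, hx, hy⟩]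
  obtain ⟨wx, hwx, hwx0⟩ := m.exists_chain_to_base hx (hbase u)
  obtain ⟨wy, hwy, hwy0⟩ := m.exists_chain_to_base hy (hbase v)
  refine ⟨wx + Finsupp.single (m.edge e) 1 + wy, ?_, fun g hcon => ?_⟩
  · simp only [map_add, boundary_single, hg, he, hwx, hwy, endSum_mk, Sym2.map_mk]
    rw [add_comm (Finsupp.single x 1), ZModModule.add_add_add_cancel,
      ZModModule.add_add_add_cancel]
  · simp [hwx0 g hcon, hwy0 g hcon]

lemma exists_cycle_lift {z : E →₀ ZMod 2} (hz : boundary ends z = 0) :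
    ∃ w : E' →₀ ZMod 2, boundary ends' w = 0 ∧
      ∀ g, ¬ m.IsContracted g → w g = Finsupp.mapDomain m.edge z g := by
  have hbranch (v) : ∃ b, m.label b = some v := nonempty_subtype.1 (m.connected_branch v).nonempty
  choose base hbase using hbranch
  choose lift hlift hlift_apply using m.exists_edge_lift hbase
  refine ⟨Finsupp.linearCombination (ZMod 2) lift z, ?_, fun g hg => ?_⟩
  · have hlin : boundary ends' ∘ₗ Finsupp.linearCombination (ZMod 2) lift =
        Finsupp.lmapDomain (ZMod 2) (ZMod 2) base ∘ₗ boundary ends := by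
      ext1 e
      ext1
      simpa using hlift e
    simpa [hz] using congr($hlin z)
  · classical
    simp only [Finsupp.linearCombination_apply, Finsupp.mapDomain, Finsupp.sum_apply,
      Finsupp.smul_apply, hlift_apply _ g hg, Finsupp.single_apply, smul_eq_mul, mul_ite, mul_one,
      mul_zero]

lemma mapDomain_edge_apply (z : E →₀ ZMod 2) (e : E) :
    Finsupp.mapDomain m.edge z (m.edge e) = z e :=
  Finsupp.mapDomain_apply m.edge_injective z e

lemma endSum_faces {faces' : E' → Sym2 F'} (c : Quot (m.Merged faces') → ZMod 2) (e : E) :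
    endSum c (m.faces faces' e) = endSum (c ∘ Quot.mk _) (faces' (m.edge e)) := by
  rw [faces]
  induction faces' (m.edge e) with | _ C C' => rfl

lemma endSum_comp_mk_of_isDeleted {faces' : E' → Sym2 F'} (c : Quot (m.Merged faces') → ZMod 2)
    {g : E'} (hg : m.IsDeleted g) : endSum (c ∘ Quot.mk _) (faces' g) = 0 := by
  induction hC : faces' g with | _ C C' =>
  have hmerged : Quot.mk (m.Merged faces') C = Quot.mk _ C' := Quot.sound ⟨g, hg, hC⟩
  simp [hmerged, CharTwo.add_self_eq_zero]

lemma coboundary_eq_mapDomain {faces' : E' → Sym2 F'} {c : Quot (m.Merged faces') → ZMod 2}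
    {z : E →₀ ZMod 2} (hc : ∀ e, z e = endSum c (m.faces faces' e)) {g : E'}
    (hg : ¬ m.IsContracted g) :
    endSum (c ∘ Quot.mk _) (faces' g) = Finsupp.mapDomain m.edge z g := by
  by_cases hrange : g ∈ Set.range m.edge
  · obtain ⟨e, rfl⟩ := hrange
    rw [mapDomain_edge_apply, hc, endSum_faces]
  · rw [Finsupp.mapDomain_of_notMem_range _ _ hrange, m.endSum_comp_mk_of_isDeleted c ⟨hg, hrange⟩]

end MinorModel

theorem IsWhitneyDual.of_minorModel [Finite V] {ends : E → Sym2 V} {ends' : E' → Sym2 V'}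
    {faces' : E' → Sym2 F'} (h : IsWhitneyDual ends' faces') (m : MinorModel ends ends')
    (hloop : ∀ e, ¬ (ends e).IsDiag) (hfin : ∀ x, {g | x ∈ ends' g}.Finite) :
    IsWhitneyDual ends (m.faces faces') := by
  refine fun z => ⟨fun hz => ?_, fun ⟨c, hc⟩ => ?_⟩
  · obtain ⟨w, hw, hwz⟩ := m.exists_cycle_lift hz
    obtain ⟨c', hc'⟩ := (h w).1 hw
    refine ⟨Quot.lift c' ?_, fun e => ?_⟩
    · rintro C C' ⟨g, ⟨hcon, hrange⟩, hg⟩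
      have hsum := hc' g
      rw [hwz g hcon, Finsupp.mapDomain_of_notMem_range _ _ hrange, hg, endSum_mk] at hsum
      exact CharTwo.add_eq_zero.1 hsum.symm
    · rw [m.endSum_faces, ← m.mapDomain_edge_apply,
        ← hwz _ (m.not_isContracted_edge (hloop e)), hc']
      rfl
  · let w g := endSum (c ∘ Quot.mk _) (faces' g)
    have hsupp : (Function.support w).Finite := by
      refine ((m.finite_isContracted hfin).union
        (Finsupp.mapDomain m.edge z).support.finite_toSet).subset fun g hg => ?_
      by_cases hcon : m.IsContracted g
      · exact Or.inl hcon
      · exact Or.inr (Finsupp.mem_support_iff.2 (m.coboundary_eq_mapDomain hc hcon ▸ hg))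
    exact m.boundary_eq_zero_of_cycle_lift (w := Finsupp.ofSupportFinite w hsupp)
      ((h _).2 ⟨_, fun g => rfl⟩) fun g => m.coboundary_eq_mapDomain hc

end Minor

section Regions

variable {V V' E E' X : Type*}

/-- A representation of the multigraph `ends` by subsets of `X`, one for each vertex and for each
edge, which are pairwise disjoint except that the region of an edge meets the regions of its
ends. -/
structure IsRegionSystem (ends : E → Sym2 V) (vertexRegion : V → Set X) (edgeRegion : E → Set X) :
    Prop where
  disjoint_vertexRegion : Pairwise (Function.onFun Disjoint vertexRegion)
  disjoint_edgeRegion : Pairwise (Function.onFun Disjoint edgeRegion)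
  disjoint_of_notMem : ∀ {v e}, v ∉ ends e → Disjoint (vertexRegion v) (edgeRegion e)
  inter_nonempty : ∀ {v e}, v ∈ ends e → (vertexRegion v ∩ edgeRegion e).Nonempty

lemma exists_connected_adj_of_walk {G : SimpleGraph V} {B : Set V} {a b : V} (w : G.Walk a b)
    (ha : a ∉ B) (hb : b ∈ B) : ∃ C : Set V, a ∈ C ∧ C ⊆ {x | x ∈ w.support} \ B ∧
      (G.induce C).Connected ∧ ∃ p ∈ C, ∃ q ∈ B, G.Adj p q := by
  induction w with
  | nil => exact absurd hb ha
  | @cons a c _ hac w ih =>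
    by_cases hc : c ∈ B
    · exact ⟨{a}, rfl, by simp [ha], (connected_iff _).2 ⟨.of_subsingleton, ⟨a, rfl⟩⟩,
        a, rfl, c, hc, hac⟩
    · obtain ⟨C, hcC, hC, hconn, p, hp, q, hq, hpq⟩ := ih hc hb
      refine ⟨{a, c} ∪ C, by simp, ?_, induce_union_connected
        (induce_pair_connected_of_adj hac).preconnected hconn.preconnected ⟨c, by simp, hcC⟩,
        p, Or.inr hp, q, hq, hpq⟩
      rintro x ((rfl | rfl) | hx)
      · exact ⟨by simp, ha⟩
      · exact ⟨by simp, hc⟩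
      · exact ⟨List.mem_cons_of_mem a (hC hx).1, (hC hx).2⟩

lemma exists_connected_adj {G : SimpleGraph V} {A B Q : Set V} (hQ : (G.induce Q).Preconnected)
    (hAB : Disjoint A B) (hA : (A ∩ Q).Nonempty) (hB : (B ∩ Q).Nonempty) :
    ∃ C ⊆ Q, Disjoint C B ∧ (A ∩ C).Nonempty ∧ (G.induce C).Connected ∧
      ∃ p ∈ C, ∃ q ∈ B, G.Adj p q := by
  obtain ⟨a, haA, haQ⟩ := hA
  obtain ⟨b, hbB, hbQ⟩ := hB
  obtain ⟨w⟩ := hQ ⟨a, haQ⟩ ⟨b, hbQ⟩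
  obtain ⟨C, haC, hC, hconn, hadj⟩ := exists_connected_adj_of_walk
    (w.map (Embedding.induce Q).toHom) (hAB.notMem_of_mem_left haA) hbB
  refine ⟨C, fun x hx => ?_, Set.disjoint_left.2 fun x hx => (hC hx).2, ⟨a, haA, haC⟩, hconn, hadj⟩
  have hxw := (hC hx).1
  rw [Set.mem_ofPred, Walk.support_map] at hxw
  obtain ⟨y, -, rfl⟩ := List.mem_map.1 hxw
  exact y.2

lemma induce_union_iUnion_connected {ι : Sort*} {G : SimpleGraph V} {S : Set V} {T : ι → Set V}
    (hS : (G.induce S).Connected) (hT : ∀ i, (G.induce (T i)).Preconnected)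
    (hST : ∀ i, (S ∩ T i).Nonempty) : (G.induce (S ∪ ⋃ i, T i)).Connected := by
  obtain ⟨⟨s, hs⟩⟩ := hS.nonempty
  refine induce_connected_of_patches s (Or.inl hs) fun {x} hx => ?_
  obtain hx | hx := hx
  · exact ⟨S, Set.subset_union_left, hs, hx, hS.preconnected _ _⟩
  · obtain ⟨i, hx⟩ := Set.mem_iUnion.1 hx
    exact ⟨S ∪ T i, Set.union_subset_union_right S (Set.subset_iUnion T i), Or.inl hs, Or.inr hx,
      (induce_union_connected hS.preconnected (hT i) (hST i)).preconnected _ _⟩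

lemma exists_label_of_disjoint {branch : V → Set V'}
    (hbranch : Pairwise (Function.onFun Disjoint branch)) :
    ∃ label : V' → Option V, ∀ x v, label x = some v ↔ x ∈ branch v := by
  classical
  refine ⟨fun x => if h : ∃ v, x ∈ branch v then some h.choose else none, fun x v => ?_⟩
  by_cases h : ∃ v, x ∈ branch v
  · dsimp only
    rw [dif_pos h, Option.some_inj]
    refine ⟨fun hv => hv ▸ h.choose_spec, fun hv => ?_⟩
    by_contra hne
    exact (hbranch hne).notMem_of_mem_left h.choose_spec hv
  · simpa [h] using fun hv => h ⟨v, hv⟩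

lemma nonempty_minorModel_of_branch {ends : E → Sym2 V} {ends' : E' → Sym2 V'}
    (hends : Function.Injective ends) {branch : V → Set V'}
    (hdisj : Pairwise (Function.onFun Disjoint branch)) (hfin : ∀ v, (branch v).Finite)
    (hconn : ∀ v, ((edgeGraph ends').induce (branch v)).Connected)
    (hadj : ∀ e, ∃ u v, ends e = s(u, v) ∧ ∃ x ∈ branch u, ∃ y ∈ branch v,
      (edgeGraph ends').Adj x y) : Nonempty (MinorModel ends ends') := by
  obtain ⟨label, hlabel⟩ := exists_label_of_disjoint hdisj
  have hbranch (v) : {x | label x = some v} = branch v := Set.ext fun x => hlabel x v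
  have hedge (e) : ∃ g, (ends' g).map label = (ends e).map some := by
    obtain ⟨u, v, he, x, hx, y, hy, ⟨g, hg⟩, -⟩ := hadj e
    exact ⟨g, by simp [he, hg, (hlabel _ _).2 hx, (hlabel _ _).2 hy]⟩
  choose edge hedge using hedge
  refine ⟨⟨label, edge, fun e e' h => hends ?_, hedge, fun v => ?_, fun v => ?_⟩⟩
  · exact Sym2.map.injective (Option.some_injective V) (by rw [← hedge, ← hedge, h])
  · rw [hbranch]; exact hfin v
  · rw [hbranch]; exact hconn v

lemma IsRegionSystem.nonempty_minorModel {ends : E → Sym2 V} {ends' : E' → Sym2 V'}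
    {R : V → Set V'} {Q : E → Set V'} (h : IsRegionSystem ends R Q) [Finite E]
    (hends : Function.Injective ends) (hloop : ∀ e, ¬ (ends e).IsDiag)
    (hRfin : ∀ v, (R v).Finite) (hQfin : ∀ e, (Q e).Finite)
    (hR : ∀ v, ((edgeGraph ends').induce (R v)).Connected)
    (hQ : ∀ e, ((edgeGraph ends').induce (Q e)).Preconnected) :
    Nonempty (MinorModel ends ends') := by
  have hends_eq (e) : ∃ u v, ends e = s(u, v) := by
    induction ends e with | _ u v => exact ⟨u, v, rfl⟩
  choose src tgt hst using hends_eq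
  have hne (e) : src e ≠ tgt e := by simpa [hst] using hloop e
  have hpart (e) := exists_connected_adj (hQ e) (h.disjoint_vertexRegion (hne e))
    (h.inter_nonempty (hst e ▸ Sym2.mem_mk_left _ _))
    (h.inter_nonempty (hst e ▸ Sym2.mem_mk_right _ _))
  choose C hCQ hCtgt hCsrc hCconn p hp q hq hpq using hpart
  -- Each edge region is cut near its target, and the part at its source is added to that source.
  refine nonempty_minorModel_of_branch hends (branch := fun v => R v ∪ ⋃ e : {e // src e = v}, C e)
    (fun v w hvw => ?_) (fun v => ?_) (fun v => ?_) fun e => ?_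
  · have hRC {v e} (hv : v ≠ src e) : Disjoint (R v) (C e) := by
      obtain rfl | hv' := eq_or_ne v (tgt e)
      · exact (hCtgt e).symm
      · exact (h.disjoint_of_notMem (by simp [hst, hv, hv'])).mono_right (hCQ e)
    simp only [Function.onFun, Set.disjoint_union_left, Set.disjoint_union_right,
      Set.disjoint_iUnion_left, Set.disjoint_iUnion_right, Subtype.forall]
    refine ⟨⟨h.disjoint_vertexRegion hvw, ?_⟩, ?_⟩
    · rintro e rfl
      exact (hRC hvw.symm).symm
    · rintro e rfl
      refine ⟨hRC hvw, ?_⟩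
      rintro e' rfl
      exact (h.disjoint_edgeRegion fun he => hvw (congrArg src he)).mono (hCQ e') (hCQ e)
  · exact (hRfin v).union (Set.finite_iUnion fun e => (hQfin e).subset (hCQ e))
  · exact induce_union_iUnion_connected (hR v) (fun e => (hCconn e).preconnected)
      fun ⟨e, he⟩ => he ▸ hCsrc e
  · exact ⟨src e, tgt e, hst e, p e, Or.inr (Set.mem_iUnion.2 ⟨⟨e, rfl⟩, hp e⟩), q e, Or.inl (hq e),
      hpq e⟩

end Regions

section Raster

/-- The lattice points within sup-distance `1` of `K` scaled by `c`: a picture of `K` at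
resolution `1 / c`. -/
def raster (c : ℝ) (K : Set (ℝ × ℝ)) : Set (ℤ × ℤ) :=
  {z | ∃ x ∈ K, dist (c • x) (z.1, z.2) < 1}

lemma dist_smul_lattice_lt_one {c : ℝ} {x : ℝ × ℝ} {z : ℤ × ℤ} :
    dist (c • x) (z.1, z.2) < 1 ↔ |c * x.1 - z.1| < 1 ∧ |c * x.2 - z.2| < 1 := by
  simp [Prod.dist_eq, Real.dist_eq]

lemma dist_smul_floor_lt_one (c : ℝ) (x : ℝ × ℝ) :
    dist (c • x) ((⌊c * x.1⌋ : ℝ), (⌊c * x.2⌋ : ℝ)) < 1 := by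
  refine dist_smul_lattice_lt_one (z := (⌊c * x.1⌋, ⌊c * x.2⌋)).2 ⟨?_, ?_⟩ <;>
    rw [Int.self_sub_floor, abs_of_nonneg (Int.fract_nonneg _)] <;> exact Int.fract_lt_one _

lemma nonempty_raster (c : ℝ) {K : Set (ℝ × ℝ)} (hK : K.Nonempty) : (raster c K).Nonempty :=
  let ⟨x, hx⟩ := hK
  ⟨(⌊c * x.1⌋, ⌊c * x.2⌋), x, hx, dist_smul_floor_lt_one c x⟩

lemma raster_inter_nonempty (c : ℝ) {K K' : Set (ℝ × ℝ)} (h : (K ∩ K').Nonempty) :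
    (raster c K ∩ raster c K').Nonempty :=
  let ⟨z, x, hx, hxz⟩ := nonempty_raster c h
  ⟨z, ⟨x, hx.1, hxz⟩, ⟨x, hx.2, hxz⟩⟩

lemma finite_raster (c : ℝ) {K : Set (ℝ × ℝ)} (hK : Bornology.IsBounded K) :
    (raster c K).Finite := by
  have hcast : Isometry fun z : ℤ × ℤ => ((z.1 : ℝ), (z.2 : ℝ)) :=
    Isometry.of_dist_eq fun z w => by simp [Prod.dist_eq]
  have hbdd := hcast.antilipschitz.isBounded_preimage ((hK.smul₀ c).thickening (δ := 1))
  refine (Metric.isCompact_of_isClosed_isBounded (isClosed_discrete _)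
    (hbdd.subset ?_)).finite_of_discrete
  exact fun z ⟨x, hx, hxz⟩ =>
    Metric.mem_thickening_iff.2 ⟨c • x, Set.smul_mem_smul_set hx, by rwa [_root_.dist_comm]⟩

lemma eventually_disjoint_raster {K K' : Set (ℝ × ℝ)} (hK : IsCompact K) (hK' : IsCompact K')
    (h : Disjoint K K') : ∀ᶠ c in Filter.atTop, Disjoint (raster c K) (raster c K') := by
  obtain ⟨δ, hδ, hd⟩ := h.exists_thickenings hK hK'.isClosed
  filter_upwards [Filter.eventually_gt_atTop (2 / δ)] with c hc
  have hc0 : 0 < c := lt_trans (by positivity) hc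
  refine Set.disjoint_left.2 fun z ⟨x, hx, hxz⟩ ⟨y, hy, hyz⟩ => ?_
  have hcxy : c * dist x y < 2 := calc
    c * dist x y = dist (c • x) (c • y) := by rw [dist_smul₀, Real.norm_of_nonneg hc0.le]
    _ ≤ dist (c • x) (z.1, z.2) + dist (c • y) (z.1, z.2) := dist_triangle_right _ _ _
    _ < 2 := by linarith
  have hxy : dist x y < δ := by
    rw [div_lt_iff₀ hδ] at hc
    exact lt_of_mul_lt_mul_left (hcxy.trans hc) hc0.le
  exact Set.disjoint_left.1 hd (Metric.self_subset_thickening hδ _ hx)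
    (Metric.mem_thickening_iff.2 ⟨y, hy, hxy⟩)

lemma eq_or_succ_of_abs_sub_lt_one {r : ℝ} {m n : ℤ} (hm : |r - m| < 1) (hn : |r - n| < 1) :
    m = n ∨ n = m + 1 ∨ m = n + 1 := by
  have hmn : |(m : ℝ) - n| < 2 := by
    calc |(m : ℝ) - n| ≤ |r - n| + |r - m| := by
          rw [← abs_neg (r - m)]; exact (abs_add_le _ _).trans' (by ring_nf; rfl)
      _ < 2 := by linarith
  have hmn' : |m - n| < 2 := by exact_mod_cast hmn
  rw [abs_lt] at hmn'
  lia

lemma reachable_induce_grid {S : Set (ℤ × ℤ)} {z w : ℤ × ℤ} (hz : z ∈ S) (hw : w ∈ S) {d : Bool}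
    (h : z = w ∨ w = z + gridStep d ∨ z = w + gridStep d) :
    ((edgeGraph gridEnds).induce S).Reachable ⟨z, hz⟩ ⟨w, hw⟩ := by
  have hstep (q) : (edgeGraph gridEnds).Adj q (q + gridStep d) :=
    (fromEdgeSet_adj _).2 ⟨⟨(q, d), rfl⟩, by cases d <;> simp [gridStep]⟩
  obtain rfl | rfl | rfl := h
  · rfl
  · exact Adj.reachable (hstep z)
  · exact Adj.reachable (hstep w).symm

lemma reachable_raster {c : ℝ} {K : Set (ℝ × ℝ)} {x : ℝ × ℝ} (hx : x ∈ K) {z w : ℤ × ℤ}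
    (hz : dist (c • x) (z.1, z.2) < 1) (hw : dist (c • x) (w.1, w.2) < 1) :
    ((edgeGraph gridEnds).induce (raster c K)).Reachable ⟨z, x, hx, hz⟩ ⟨w, x, hx, hw⟩ := by
  have hz' := dist_smul_lattice_lt_one.1 hz
  have hw' := dist_smul_lattice_lt_one.1 hw
  have hzK : z ∈ raster c K := ⟨x, hx, hz⟩
  have hwK : w ∈ raster c K := ⟨x, hx, hw⟩
  have hcorner : (w.1, z.2) ∈ raster c K := ⟨x, hx, dist_smul_lattice_lt_one.2 ⟨hw'.1, hz'.2⟩⟩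
  have hhor := reachable_induce_grid (d := true) hzK hcorner <| by
    simpa [gridStep, Prod.ext_iff] using eq_or_succ_of_abs_sub_lt_one hz'.1 hw'.1
  have hver := reachable_induce_grid (d := false) hcorner hwK <| by
    simpa [gridStep, Prod.ext_iff] using eq_or_succ_of_abs_sub_lt_one hz'.2 hw'.2
  exact hhor.trans hver

lemma isOpen_setOf_exists_dist_lt_one (c : ℝ) (P : Set (ℤ × ℤ)) :
    IsOpen {x : ℝ × ℝ | ∃ z ∈ P, dist (c • x) (z.1, z.2) < 1} := by
  simp only [← exists_prop, Set.ofPred_exists]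
  exact isOpen_iUnion fun z => isOpen_iUnion fun _ => isOpen_lt (by fun_prop) (by fun_prop)

lemma preconnected_raster (c : ℝ) {K : Set (ℝ × ℝ)} (hK : IsPreconnected K) :
    ((edgeGraph gridEnds).induce (raster c K)).Preconnected := by
  intro z w
  by_contra hzw
  let P : Set (ℤ × ℤ) :=
    Subtype.val '' {q | ((edgeGraph gridEnds).induce (raster c K)).Reachable z q}
  have hcover : K ⊆ {x | ∃ q ∈ P, dist (c • x) (q.1, q.2) < 1} ∪
      {x | ∃ q ∈ Pᶜ, dist (c • x) (q.1, q.2) < 1} := fun x _ => by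
    by_cases h : (⌊c * x.1⌋, ⌊c * x.2⌋) ∈ P
    · exact Or.inl ⟨_, h, dist_smul_floor_lt_one c x⟩
    · exact Or.inr ⟨_, h, dist_smul_floor_lt_one c x⟩
  obtain ⟨x, hx, hxz⟩ := z.2
  obtain ⟨y, hy, hyw⟩ := w.2
  have hwP : w.1 ∈ Pᶜ := by
    rintro ⟨q, hq, hqw⟩
    exact hzw (Subtype.ext hqw ▸ hq)
  obtain ⟨k, hk, ⟨_, ⟨q, hq, rfl⟩, hkq⟩, q', hq', hkq'⟩ := hK _ _
    (isOpen_setOf_exists_dist_lt_one c P) (isOpen_setOf_exists_dist_lt_one c Pᶜ) hcover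
    ⟨x, hx, z.1, ⟨z, .rfl, rfl⟩, hxz⟩ ⟨y, hy, w.1, hwP, hyw⟩
  exact hq' ⟨_, hq.trans (reachable_raster hk hkq hkq'), rfl⟩

lemma finite_setOf_mem_gridEnds (x : ℤ × ℤ) : {g | x ∈ gridEnds g}.Finite := by
  refine (Set.finite_range fun q : Bool × Bool =>
    ((if q.1 then x else x - gridStep q.2, q.2) : GridEdge)).subset fun g hg => ?_
  obtain h | h := Sym2.mem_iff.1 hg
  · exact ⟨(true, g.2), by simp [h]⟩
  · exact ⟨(false, g.2), by simp [h]⟩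

lemma IsRegionSystem.hasWhitneyDual {V E : Type*} [Finite V] [Finite E] {ends : E → Sym2 V}
    {R : V → Set (ℝ × ℝ)} {Q : E → Set (ℝ × ℝ)} (h : IsRegionSystem ends R Q)
    (hends : Function.Injective ends) (hloop : ∀ e, ¬ (ends e).IsDiag)
    (hRc : ∀ v, IsCompact (R v)) (hQc : ∀ e, IsCompact (Q e))
    (hR : ∀ v, IsConnected (R v)) (hQ : ∀ e, IsPreconnected (Q e)) : HasWhitneyDual ends := by
  have hRR : ∀ᶠ c in Filter.atTop, ∀ v w, v ≠ w → Disjoint (raster c (R v)) (raster c (R w)) := by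
    simp only [Filter.eventually_all]
    exact fun v w hvw => eventually_disjoint_raster (hRc v) (hRc w) (h.disjoint_vertexRegion hvw)
  have hQQ : ∀ᶠ c in Filter.atTop, ∀ e f, e ≠ f → Disjoint (raster c (Q e)) (raster c (Q f)) := by
    simp only [Filter.eventually_all]
    exact fun e f hef => eventually_disjoint_raster (hQc e) (hQc f) (h.disjoint_edgeRegion hef)
  have hRQ : ∀ᶠ c in Filter.atTop, ∀ v e, v ∉ ends e →
      Disjoint (raster c (R v)) (raster c (Q e)) := by
    simp only [Filter.eventually_all]
    exact fun v e hve => eventually_disjoint_raster (hRc v) (hQc e) (h.disjoint_of_notMem hve)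
  obtain ⟨c, hRR, hQQ, hRQ⟩ := (hRR.and (hQQ.and hRQ)).exists
  have hsystem : IsRegionSystem ends (fun v => raster c (R v)) (fun e => raster c (Q e)) :=
    ⟨hRR, hQQ, @hRQ, fun hve => raster_inter_nonempty c (h.inter_nonempty hve)⟩
  obtain ⟨m⟩ := hsystem.nonempty_minorModel hends hloop
    (fun v => finite_raster c (hRc v).isBounded) (fun e => finite_raster c (hQc e).isBounded)
    (fun v => (connected_iff _).2 ⟨preconnected_raster c (hR v).isPreconnected,
      (nonempty_raster c (hR v).nonempty).to_subtype⟩)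
    (fun e => preconnected_raster c (hQ e))
  exact ⟨_, _, isWhitneyDual_grid.of_minorModel m hloop finite_setOf_mem_gridEnds⟩

end Raster

section Drawing

variable {V E : Type*}

/-- A drawing of the multigraph `ends` in the plane. Arcs are parametrized by `[0, 1]`, their values
outside this interval being irrelevant. -/
structure PlaneDrawing (ends : E → Sym2 V) where
  point : V → ℝ × ℝ
  arc : E → ℝ → ℝ × ℝ
  src : E → V
  tgt : E → V
  ends_eq : ∀ e, ends e = s(src e, tgt e)
  point_injective : Function.Injective point
  continuous_arc : ∀ e, Continuous (arc e)
  arc_zero : ∀ e, arc e 0 = point (src e)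
  arc_one : ∀ e, arc e 1 = point (tgt e)
  arc_ne_point : ∀ e, ∀ t ∈ Set.Ioo (0 : ℝ) 1, ∀ v, arc e t ≠ point v
  arc_injective : ∀ e e', ∀ t ∈ Set.Ioo (0 : ℝ) 1, ∀ t' ∈ Set.Ioo (0 : ℝ) 1,
    arc e t = arc e' t' → e = e' ∧ t = t'

lemma IsPlanar.nonempty_planeDrawing {G : SimpleGraph V} (h : IsPlanar G) :
    Nonempty (PlaneDrawing (Subtype.val : G.edgeSet → Sym2 V)) := by
  obtain ⟨f, γ, hf, hγ, hends, hinj, hint, hcross⟩ := h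
  choose src tgt hst h0 h1 using hends
  have harc (e t) (ht : t ∈ Set.Ioo (0 : ℝ) 1) :
      Set.IccExtend zero_le_one (γ e) t = γ e ⟨t, Set.Ioo_subset_Icc_self ht⟩ :=
    Set.IccExtend_of_mem _ _ _
  refine ⟨⟨f, fun e => Set.IccExtend zero_le_one (γ e), src, tgt, hst, hf,
    fun e => (hγ e).Icc_extend', fun e => ?_, fun e => ?_, fun e t ht v => ?_,
    fun e e' t ht t' ht' heq => ?_⟩⟩
  · rw [← h0, Set.IccExtend_left]
  · rw [← h1, Set.IccExtend_right]
  · rw [harc e t ht]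
    exact hint e _ ht.1.ne' ht.2.ne v
  · rw [harc e t ht, harc e' t' ht'] at heq
    obtain rfl | hne := eq_or_ne e e'
    · exact ⟨rfl, congrArg Subtype.val (hinj e heq)⟩
    · obtain ⟨v, hv⟩ := hcross e e' hne _ _ heq
      exact absurd hv.symm (hint e _ ht.1.ne' ht.2.ne v)

lemma PlaneDrawing.injOn_arc {ends : E → Sym2 V} (D : PlaneDrawing ends) {e : E}
    (he : ¬ (ends e).IsDiag) : Set.InjOn (D.arc e) (Set.Icc 0 1) := by
  have hpoint : D.point (D.src e) ≠ D.point (D.tgt e) := by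
    rwa [D.point_injective.ne_iff, Ne, ← Sym2.mk_isDiag_iff, ← D.ends_eq]
  intro s hs t ht hst
  obtain rfl | rfl | hs := Set.eq_endpoints_or_mem_Ioo_of_mem_Icc hs <;>
    obtain rfl | rfl | ht := Set.eq_endpoints_or_mem_Ioo_of_mem_Icc ht
  · rfl
  · exact absurd (by rw [← D.arc_zero, hst, D.arc_one]) hpoint
  · exact absurd (hst.symm.trans (D.arc_zero e)) (D.arc_ne_point e t ht _)
  · exact absurd (by rw [← D.arc_zero, ← hst, D.arc_one]) hpoint
  · rfl
  · exact absurd (hst.symm.trans (D.arc_one e)) (D.arc_ne_point e t ht _)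
  · exact absurd (hst.trans (D.arc_zero e)) (D.arc_ne_point e s hs _)
  · exact absurd (hst.trans (D.arc_one e)) (D.arc_ne_point e s hs _)
  · exact (D.arc_injective e e s hs t ht hst).2

lemma PlaneDrawing.isPlanar {G : SimpleGraph V}
    (D : PlaneDrawing (Subtype.val : G.edgeSet → Sym2 V)) : IsPlanar G := by
  refine ⟨D.point, fun e t => D.arc e t, D.point_injective,
    fun e => (D.continuous_arc e).comp continuous_subtype_val,
    fun e => ⟨D.src e, D.tgt e, D.ends_eq e, D.arc_zero e, D.arc_one e⟩,
    fun e s t h => Subtype.ext (D.injOn_arc (G.not_isDiag_of_mem_edgeSet e.2) s.2 t.2 h),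
    fun e t h0 h1 => D.arc_ne_point e t ⟨t.2.1.lt_of_ne' h0, t.2.2.lt_of_ne h1⟩,
    fun e e' hne s t h => ?_⟩
  dsimp only at h ⊢
  obtain hs | hs | hs := Set.eq_endpoints_or_mem_Ioo_of_mem_Icc s.2
  · exact ⟨D.src e, by rw [hs, D.arc_zero]⟩
  · exact ⟨D.tgt e, by rw [hs, D.arc_one]⟩
  obtain ht | ht | ht := Set.eq_endpoints_or_mem_Ioo_of_mem_Icc t.2
  · exact ⟨D.src e', by rw [h, ht, D.arc_zero]⟩
  · exact ⟨D.tgt e', by rw [h, ht, D.arc_one]⟩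
  · exact absurd (D.arc_injective e e' s hs t ht h).1 hne

lemma IsPlanar.of_injective_hom {W : Type*} {G : SimpleGraph V} {H : SimpleGraph W}
    (h : IsPlanar H) (φ : G →g H) (hφ : Function.Injective φ) : IsPlanar G := by
  obtain ⟨D⟩ := h.nonempty_planeDrawing
  have hends (e : G.edgeSet) : ∃ u v, e.1 = s(u, v) ∧ D.src (φ.mapEdgeSet e) = φ u ∧
      D.tgt (φ.mapEdgeSet e) = φ v := by
    obtain ⟨⟨u, v⟩, huv⟩ := e
    have hst : s(φ u, φ v) = s(D.src _, D.tgt _) := D.ends_eq (φ.mapEdgeSet ⟨s(u, v), huv⟩)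
    obtain ⟨hu, hv⟩ | ⟨hu, hv⟩ := Sym2.eq_iff.1 hst
    · exact ⟨u, v, rfl, hu.symm, hv.symm⟩
    · exact ⟨v, u, Sym2.eq_swap, hv.symm, hu.symm⟩
  choose src tgt hst hsrc htgt using hends
  refine PlaneDrawing.isPlanar ⟨D.point ∘ φ, fun e => D.arc (φ.mapEdgeSet e), src, tgt, hst,
    D.point_injective.comp hφ, fun e => D.continuous_arc _, fun e => ?_, fun e => ?_,
    fun e t ht v => D.arc_ne_point _ t ht _, fun e e' t ht t' ht' heq => ?_⟩
  · rw [D.arc_zero, hsrc, Function.comp_apply]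
  · rw [D.arc_one, htgt, Function.comp_apply]
  · exact (D.arc_injective _ _ t ht t' ht' heq).imp_left fun h =>
      Hom.mapEdgeSet.injective φ hφ h

namespace PlaneDrawing

variable {ends : E → Sym2 V} (D : PlaneDrawing ends)

/-- The vertex at the beginning (`false`) or at the end (`true`) of an arc. -/
def endpoint (d : E × Bool) : V := if d.2 then D.tgt d.1 else D.src d.1

/-- The third of an arc that is adjacent to its beginning (`false`) or its end (`true`). -/
def outerThird (d : E × Bool) : Set (ℝ × ℝ) :=
  D.arc d.1 '' if d.2 then Set.Icc (2 / 3) 1 else Set.Icc 0 (1 / 3)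

/-- The middle third of an arc. -/
def middleThird (e : E) : Set (ℝ × ℝ) := D.arc e '' Set.Icc (1 / 3) (2 / 3)

/-- A vertex together with the thirds of the arcs that are adjacent to it. -/
def star (v : V) : Set (ℝ × ℝ) :=
  {D.point v} ∪ ⋃ d : {d : E × Bool // D.endpoint d = v}, D.outerThird d

lemma point_mem_outerThird (d : E × Bool) : D.point (D.endpoint d) ∈ D.outerThird d := by
  obtain ⟨e, _ | _⟩ := d
  · exact ⟨0, by norm_num, D.arc_zero e⟩
  · exact ⟨1, by norm_num, D.arc_one e⟩

lemma isCompact_outerThird (d : E × Bool) : IsCompact (D.outerThird d) := by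
  obtain ⟨e, _ | _⟩ := d <;> exact isCompact_Icc.image (D.continuous_arc e)

lemma isPreconnected_outerThird (d : E × Bool) : IsPreconnected (D.outerThird d) := by
  obtain ⟨e, _ | _⟩ := d <;> exact isPreconnected_Icc.image _ (D.continuous_arc e).continuousOn

lemma outerThird_inter_middleThird_nonempty (d : E × Bool) :
    (D.outerThird d ∩ D.middleThird d.1).Nonempty := by
  obtain ⟨e, _ | _⟩ := d
  · exact ⟨_, ⟨1 / 3, by norm_num, rfl⟩, ⟨1 / 3, by norm_num, rfl⟩⟩
  · exact ⟨_, ⟨2 / 3, by norm_num, rfl⟩, ⟨2 / 3, by norm_num, rfl⟩⟩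

lemma exists_of_mem_middleThird {e : E} {x : ℝ × ℝ} (hx : x ∈ D.middleThird e) :
    ∃ t ∈ Set.Ioo (0 : ℝ) 1, D.arc e t = x := by
  obtain ⟨t, ht, rfl⟩ := hx
  exact ⟨t, ⟨by linarith [ht.1], by linarith [ht.2]⟩, rfl⟩

lemma eq_or_exists_of_mem_star {v : V} {x : ℝ × ℝ} (hx : x ∈ D.star v) :
    x = D.point v ∨ ∃ e, ∃ t ∈ Set.Ioo (0 : ℝ) 1, D.arc e t = x ∧
      (D.src e = v ∧ t ≤ 1 / 3 ∨ D.tgt e = v ∧ 2 / 3 ≤ t) := by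
  obtain hx | hx := hx
  · exact Or.inl hx
  obtain ⟨⟨⟨e, b⟩, rfl⟩, t, ht, rfl⟩ := Set.mem_iUnion.1 hx
  cases b
  · obtain rfl | h0 := ht.1.eq_or_lt
    · exact Or.inl (D.arc_zero e)
    · exact Or.inr ⟨e, t, ⟨h0, by linarith [ht.2]⟩, rfl, Or.inl ⟨rfl, ht.2⟩⟩
  · obtain rfl | h1 := ht.2.eq_or_lt
    · exact Or.inl (D.arc_one e)
    · exact Or.inr ⟨e, t, ⟨by linarith [ht.1], h1⟩, rfl, Or.inr ⟨rfl, ht.1⟩⟩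

lemma disjoint_star {v w : V} (hvw : v ≠ w) : Disjoint (D.star v) (D.star w) := by
  refine Set.disjoint_left.2 fun x hxv hxw => ?_
  obtain rfl | ⟨e, t, ht, rfl, hv⟩ := D.eq_or_exists_of_mem_star hxv
  · obtain h | ⟨e, t, ht, h, -⟩ := D.eq_or_exists_of_mem_star hxw
    · exact hvw (D.point_injective h)
    · exact D.arc_ne_point e t ht v h
  · obtain h | ⟨e', t', ht', h, hw⟩ := D.eq_or_exists_of_mem_star hxw
    · exact D.arc_ne_point e t ht w h
    · obtain ⟨rfl, rfl⟩ := D.arc_injective e' e t' ht' t ht h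
      obtain ⟨rfl, hv⟩ | ⟨rfl, hv⟩ := hv <;> obtain ⟨rfl, hw⟩ | ⟨rfl, hw⟩ := hw
      · exact hvw rfl
      · linarith
      · linarith
      · exact hvw rfl

lemma disjoint_middleThird {e e' : E} (hne : e ≠ e') :
    Disjoint (D.middleThird e) (D.middleThird e') := by
  refine Set.disjoint_left.2 fun x he he' => ?_
  obtain ⟨t, ht, rfl⟩ := D.exists_of_mem_middleThird he
  obtain ⟨t', ht', h⟩ := D.exists_of_mem_middleThird he'
  exact hne (D.arc_injective _ _ _ ht _ ht' h.symm).1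

lemma disjoint_star_middleThird {v : V} {e : E} (hve : v ∉ ends e) :
    Disjoint (D.star v) (D.middleThird e) := by
  refine Set.disjoint_left.2 fun x hxv hxe => ?_
  obtain ⟨t, ht, rfl⟩ := D.exists_of_mem_middleThird hxe
  obtain h | ⟨e', t', ht', h, hv⟩ := D.eq_or_exists_of_mem_star hxv
  · exact D.arc_ne_point e t ht v h
  · obtain ⟨rfl, -⟩ := D.arc_injective e' e t' ht' t ht h
    rw [D.ends_eq, Sym2.mem_iff, not_or] at hve
    obtain ⟨h, -⟩ | ⟨h, -⟩ := hv
    exacts [hve.1 h.symm, hve.2 h.symm]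

lemma exists_endpoint_eq {v : V} {e : E} (hve : v ∈ ends e) : ∃ b, D.endpoint (e, b) = v := by
  obtain rfl | rfl := Sym2.mem_iff.1 (D.ends_eq e ▸ hve)
  exacts [⟨false, rfl⟩, ⟨true, rfl⟩]

lemma isRegionSystem : IsRegionSystem ends D.star D.middleThird where
  disjoint_vertexRegion _ _ := D.disjoint_star
  disjoint_edgeRegion _ _ := D.disjoint_middleThird
  disjoint_of_notMem := D.disjoint_star_middleThird
  inter_nonempty {v e} hve := by
    obtain ⟨b, hb⟩ := D.exists_endpoint_eq hve
    exact (D.outerThird_inter_middleThird_nonempty (e, b)).mono <| Set.inter_subset_inter_left _ <|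
      (Set.subset_iUnion (fun d : {d // D.endpoint d = v} => D.outerThird d) ⟨_, hb⟩).trans
        Set.subset_union_right

lemma isCompact_star [Finite E] (v : V) : IsCompact (D.star v) :=
  isCompact_singleton.union (isCompact_iUnion fun d => D.isCompact_outerThird d)

lemma isConnected_star (v : V) : IsConnected (D.star v) := by
  refine ⟨⟨_, Or.inl rfl⟩, isPreconnected_of_forall (D.point v) fun y hy => ?_⟩
  obtain rfl | hy := hy
  · exact ⟨_, Set.subset_union_left, rfl, rfl, isPreconnected_singleton⟩
  · obtain ⟨⟨d, rfl⟩, hy⟩ := Set.mem_iUnion.1 hy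
    refine ⟨D.outerThird d, fun x hx => Or.inr (Set.mem_iUnion.2 ⟨⟨d, rfl⟩, hx⟩),
      D.point_mem_outerThird d, hy, D.isPreconnected_outerThird d⟩

lemma hasWhitneyDual (D : PlaneDrawing ends) [Finite V] [Finite E] (hends : Function.Injective ends)
    (hloop : ∀ e, ¬ (ends e).IsDiag) : HasWhitneyDual ends :=
  D.isRegionSystem.hasWhitneyDual hends hloop D.isCompact_star
    (fun e => isCompact_Icc.image (D.continuous_arc e)) D.isConnected_star
    (fun e => isPreconnected_Icc.image _ (D.continuous_arc e).continuousOn)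

end PlaneDrawing

lemma IsPlanar.card_edgeSet_add_four_le [Finite V] {G : SimpleGraph V} (h : IsPlanar G)
    (hG : G.CliqueFree 3) (hV : 3 ≤ Nat.card V) : Nat.card G.edgeSet + 4 ≤ 2 * Nat.card V := by
  obtain ⟨D⟩ := h.nonempty_planeDrawing
  have hdual := D.hasWhitneyDual Subtype.val_injective fun e => G.not_isDiag_of_mem_edgeSet e.2
  exact hdual.card_edgeSet_add_four_le hG hV

end Drawing

section Thickness

variable {V W α β : Type*} {G : SimpleGraph V} {H : SimpleGraph W} {k : ℕ}

/-- `G` can be covered by `k` planar graphs on its vertices; unlike in the definition of thickness,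
these need not be subgraphs of `G`. -/
def HasPlanarCover (G : SimpleGraph V) (k : ℕ) : Prop :=
  ∃ C : Fin k → SimpleGraph V, (∀ i, IsPlanar (C i)) ∧ G ≤ ⨆ i, C i

lemma IsPlanar.mono {G' : SimpleGraph V} (h : IsPlanar G') (hle : G ≤ G') : IsPlanar G :=
  h.of_injective_hom (Hom.ofLE hle) Function.injective_id

lemma HasPlanarCover.exists_iSup_eq (h : HasPlanarCover G k) :
    ∃ C : Fin k → SimpleGraph V, (∀ i, C i ≤ G) ∧ (∀ i, IsPlanar (C i)) ∧ ⨆ i, C i = G := by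
  obtain ⟨C, hC, hG⟩ := h
  exact ⟨fun i => G ⊓ C i, fun i => inf_le_left, fun i => (hC i).mono inf_le_right,
    by rw [← inf_iSup_eq, inf_eq_left.2 hG]⟩

lemma thickness_eq_sInf (G : SimpleGraph V) : thickness G = sInf {k | HasPlanarCover G k} :=
  congrArg sInf <| Set.ext fun _ =>
    ⟨fun ⟨C, _, hC, hG⟩ => ⟨C, hC, hG.ge⟩, HasPlanarCover.exists_iSup_eq⟩

lemma HasPlanarCover.thickness_le (h : HasPlanarCover G k) : thickness G ≤ k :=
  (thickness_eq_sInf G).trans_le (Nat.sInf_le h)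

lemma HasPlanarCover.hasPlanarCover_thickness (h : HasPlanarCover G k) :
    HasPlanarCover G (thickness G) := by
  rw [thickness_eq_sInf]
  exact Nat.sInf_mem (s := {k | HasPlanarCover G k}) ⟨k, h⟩

lemma HasPlanarCover.of_injective_hom (h : HasPlanarCover H k) (φ : G →g H)
    (hφ : Function.Injective φ) : HasPlanarCover G k := by
  obtain ⟨C, hC, hH⟩ := h
  refine ⟨fun i => (C i).comap φ,
    fun i => (hC i).of_injective_hom ⟨φ, fun hab => hab⟩ hφ, fun a b hab => ?_⟩
  simpa only [iSup_adj, comap_adj] using hH (φ.map_adj hab)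

lemma HasPlanarCover.card_edgeSet_add_le [Finite V] (h : HasPlanarCover G k)
    (hG : G.CliqueFree 3) (hV : 3 ≤ Nat.card V) :
    Nat.card G.edgeSet + 4 * k ≤ k * (2 * Nat.card V) := by
  obtain ⟨C, hCG, hC, rfl⟩ := h.exists_iSup_eq
  calc Nat.card (⨆ i, C i).edgeSet + 4 * k
      = (⋃ i, (C i).edgeSet).ncard + ∑ _ : Fin k, 4 := by
        rw [edgeSet_iSup, Nat.card_coe_set_eq]
        simp [mul_comm]
    _ ≤ ∑ i, (C i).edgeSet.ncard + ∑ _ : Fin k, 4 := by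
        gcongr
        exact Set.ncard_iUnion_le_of_fintype _
    _ = ∑ i, (Nat.card (C i).edgeSet + 4) := Finset.sum_add_distrib.symm
    _ ≤ ∑ _ : Fin k, 2 * Nat.card V :=
        Finset.sum_le_sum fun i _ => (hC i).card_edgeSet_add_four_le (hG.anti (hCG i)) hV
    _ = k * (2 * Nat.card V) := by simp

lemma cliqueFree_three_completeBipartiteGraph : (completeBipartiteGraph α β).CliqueFree 3 :=
  (CompleteBipartiteGraph.bicoloring α β).colorable.cliqueFree (by simp)

lemma natCard_edgeSet_completeBipartiteGraph :
    Nat.card (completeBipartiteGraph α β).edgeSet = Nat.card α * Nat.card β := by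
  rw [edgeSet_completeBipartiteGraph, ← Nat.card_prod]
  exact Nat.card_range_of_injective (by grind [Function.Injective])

lemma HasPlanarCover.card_mul_card_add_le [Finite α] [Finite β]
    (h : HasPlanarCover (completeBipartiteGraph α β) k) (hαβ : 3 ≤ Nat.card α + Nat.card β) :
    Nat.card α * Nat.card β + 4 * k ≤ k * (2 * (Nat.card α + Nat.card β)) := by
  rw [← Nat.card_sum] at hαβ ⊢
  exact natCard_edgeSet_completeBipartiteGraph (α := α) ▸
    h.card_edgeSet_add_le cliqueFree_three_completeBipartiteGraph hαβ

end Thickness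

section TwoPage

/-- The height over `x` of the parabola through `(a, 0)` and `(b, 0)`, in the upper half plane
(`true`) or in the lower half plane (`false`). -/
def parabola (page : Bool) (a b x : ℝ) : ℝ :=
  if page then (x - a) * (b - x) else -((x - a) * (b - x))

lemma continuous_parabola (page : Bool) (a b : ℝ) : Continuous (parabola page a b) := by
  unfold parabola
  cases page <;> simp only [Bool.false_eq_true, if_true, if_false] <;> fun_prop

lemma mul_pos_of_mem_Ioo {a b x : ℝ} (hx : x ∈ Set.Ioo a b) : 0 < (x - a) * (b - x) :=
  mul_pos (sub_pos.2 hx.1) (sub_pos.2 hx.2)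

lemma parabola_ne_zero (page : Bool) {a b x : ℝ} (hx : x ∈ Set.Ioo a b) :
    parabola page a b x ≠ 0 := by
  have := mul_pos_of_mem_Ioo hx
  cases page <;> simp [parabola] <;> grind

lemma page_eq_of_parabola_eq {page page' : Bool} {a b c d x : ℝ} (hab : x ∈ Set.Ioo a b)
    (hcd : x ∈ Set.Ioo c d) (h : parabola page a b x = parabola page' c d x) : page = page' := by
  have := mul_pos_of_mem_Ioo hab
  have := mul_pos_of_mem_Ioo hcd
  cases page <;> cases page' <;>
    simp only [parabola, Bool.false_eq_true, if_true, if_false] at h ⊢ <;> linarith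

lemma eq_or_cross_of_parabola_eq {page : Bool} {a b c d x : ℝ} (hab : x ∈ Set.Ioo a b)
    (hcd : x ∈ Set.Ioo c d) (h : parabola page a b x = parabola page c d x) :
    a = c ∧ b = d ∨ (a < c ∧ c < b ∧ b < d) ∨ (c < a ∧ a < d ∧ d < b) := by
  replace h : (x - a) * (b - x) = (x - c) * (d - x) := by
    cases page
    · exact neg_injective h
    · exact h
  obtain ⟨hax, hxb⟩ := hab
  obtain ⟨hcx, hxd⟩ := hcd
  obtain hac | rfl | hca := lt_trichotomy a c
  · refine Or.inr (Or.inl ⟨hac, hcx.trans hxb, ?_⟩)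
    by_contra! hdb
    nlinarith
  · exact Or.inl ⟨rfl, by linarith [mul_left_cancel₀ (sub_pos.2 hax).ne' h]⟩
  · refine Or.inr (Or.inr ⟨hca, hax.trans hxd, ?_⟩)
    by_contra! hbd
    nlinarith

lemma lineMap_mem_Ioo {a b t : ℝ} (hab : a < b) (ht : t ∈ Set.Ioo (0 : ℝ) 1) :
    AffineMap.lineMap a b t ∈ Set.Ioo a b :=
  ⟨(left_lt_lineMap_iff_lt ht.1).2 hab, (lineMap_lt_right_iff_lt ht.2).2 hab⟩

variable {V ι : Type*} {G : SimpleGraph V}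

/-- No two arcs joining related points cross, when the points are placed on a line by `pos` and all
arcs run on the same side of it. -/
def NonCrossing [LT ι] (pos : V → ι) (R : V → V → Prop) : Prop :=
  ∀ ⦃a b c d⦄, R a b → R c d → pos a < pos c → pos c < pos b → ¬ pos b < pos d

/-- `G` has a two-page book embedding with spine order `pos` in which all edges on the page `b`,
directed along the spine, satisfy `R b`. -/
structure IsTwoPage [LT ι] (G : SimpleGraph V) (pos : V → ι) (R : Bool → V → V → Prop) : Prop where
  injective : Function.Injective pos
  nonCrossing : ∀ page, NonCrossing pos (R page)
  exists_page : ∀ {a b}, G.Adj a b → pos a < pos b → ∃ page, R page a b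

lemma IsTwoPage.isPlanar_of_real {pos : V → ℝ} {R : Bool → V → V → Prop}
    (h : IsTwoPage G pos R) : IsPlanar G := by
  have hedge (e : G.edgeSet) : ∃ a b page, e.1 = s(a, b) ∧ pos a < pos b ∧ R page a b := by
    obtain ⟨⟨a, b⟩, hab : G.Adj a b⟩ := e
    obtain hlt | hlt := (h.injective.ne hab.ne).lt_or_gt
    · exact ⟨a, b, (h.exists_page hab hlt).imp fun _ hR => ⟨rfl, hlt, hR⟩⟩
    · exact ⟨b, a, (h.exists_page hab.symm hlt).imp fun _ hR => ⟨Sym2.eq_swap, hlt, hR⟩⟩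
  choose a b page hends hlt hR using hedge
  let x (e) (t : ℝ) : ℝ := AffineMap.lineMap (pos (a e)) (pos (b e)) t
  have hx (e) {t} (ht : t ∈ Set.Ioo (0 : ℝ) 1) : x e t ∈ Set.Ioo (pos (a e)) (pos (b e)) :=
    lineMap_mem_Ioo (hlt e) ht
  refine PlaneDrawing.isPlanar ⟨fun v => (pos v, 0),
    fun e t => (x e t, parabola (page e) (pos (a e)) (pos (b e)) (x e t)), a, b, hends,
    fun v w hvw => h.injective (congrArg Prod.fst hvw), fun e => ?_, fun e => ?_, fun e => ?_,
    fun e t ht v hv => parabola_ne_zero (page e) (hx e ht) (congrArg Prod.snd hv),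
    fun e e' t ht t' ht' heq => ?_⟩
  · have hcont : Continuous (x e) := AffineMap.lineMap_continuous
    exact hcont.prodMk ((continuous_parabola _ _ _).comp hcont)
  · simp [x, parabola]
  · simp [x, parabola]
  · obtain ⟨hxx, hyy⟩ := Prod.ext_iff.1 heq
    dsimp only at hxx hyy
    have hxe' := hx e' ht'
    rw [← hxx] at hyy hxe'
    have hpage := page_eq_of_parabola_eq (hx e ht) hxe' hyy
    rw [hpage] at hyy
    obtain ⟨ha, hb⟩ | ⟨h₁, h₂, h₃⟩ | ⟨h₁, h₂, h₃⟩ :=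
      eq_or_cross_of_parabola_eq (hx e ht) hxe' hyy
    · have hee : e = e' := Subtype.ext (by rw [hends, hends, h.injective ha, h.injective hb])
      subst hee
      exact ⟨rfl, AffineMap.lineMap_injective ℝ (hlt e).ne hxx⟩
    · exact absurd h₃ (h.nonCrossing _ (hpage ▸ hR e) (hR e') h₁ h₂)
    · exact absurd h₃ (h.nonCrossing _ (hR e') (hpage ▸ hR e) h₁ h₂)

lemma IsTwoPage.isPlanar [LinearOrder ι] [Countable ι] {pos : V → ι} {R : Bool → V → V → Prop}
    (h : IsTwoPage G pos R) : IsPlanar G := by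
  obtain ⟨f⟩ := Order.embedding_from_countable_to_dense ι ℝ
  refine IsTwoPage.isPlanar_of_real (pos := f ∘ pos) (R := R) ⟨f.injective.comp h.injective, ?_, ?_⟩
  · intro page a b c d
    simpa only [Function.comp_apply, f.lt_iff_lt] using @h.nonCrossing page a b c d
  · intro a b
    simpa only [Function.comp_apply, f.lt_iff_lt] using @h.exists_page a b

end TwoPage

section Stacks

variable {V σ : Type*} [LinearOrder σ]

/-- The order in which vertices can follow one another on a line cut into consecutive slots `σ`,
where only the slots in `stack` may hold more than one vertex. -/
def WeaklyPrecedes (stack : Set σ) (s t : σ) : Prop := s < t ∨ s = t ∧ s ∈ stack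

/-- The strengthening of `NonCrossing` that survives when every slot in `stack` is filled with
several consecutive vertices. -/
def StackNonCrossing (stack : Set σ) (R : σ → σ → Prop) : Prop :=
  ∀ ⦃a b c d⦄, R a b → R c d → WeaklyPrecedes stack a c → WeaklyPrecedes stack c b →
    ¬ WeaklyPrecedes stack b d

lemma isPlanar_comap_of_stackNonCrossing [Countable V] [Countable σ] {H : SimpleGraph σ}
    {stack : Set σ} {R : Bool → σ → σ → Prop} {slot : V → σ}
    (hstack : ∀ ⦃v w⦄, slot v = slot w → v ≠ w → slot v ∈ stack)
    (hR : ∀ page, StackNonCrossing stack (R page))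
    (hH : ∀ ⦃s t⦄, H.Adj s t → s < t → ∃ page, R page s t) : IsPlanar (H.comap slot) := by
  obtain ⟨index, hindex⟩ := exists_injective_nat V
  have : Countable (σ ×ₗ ℕ) := inferInstanceAs (Countable (σ × ℕ))
  let pos (v : V) : σ ×ₗ ℕ := toLex (slot v, index v)
  have hprec {v w : V} (h : pos v < pos w) : WeaklyPrecedes stack (slot v) (slot w) := by
    obtain hlt | ⟨heq, hidx⟩ := Prod.Lex.toLex_lt_toLex.1 h
    · exact .inl hlt
    · exact .inr ⟨heq, hstack heq fun hvw => hidx.ne (congrArg index hvw)⟩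
  refine IsTwoPage.isPlanar (pos := pos) (R := fun page v w => R page (slot v) (slot w))
    ⟨fun v w h => hindex (congrArg (fun q => (ofLex q).2) h),
      fun page a b c d hab hcd hac hcb hbd =>
        hR page hab hcd (hprec hac) (hprec hcb) (hprec hbd), fun {v w} hvw hlt => ?_⟩
  obtain hlt | ⟨heq, -⟩ := hprec hlt
  · exact hH hvw hlt
  · exact absurd heq (H.ne_of_adj hvw)

end Stacks

section Construction

/-- The labels of the four vertices that each side contributes to a block. -/
inductive Corner | a | b | c | d
  deriving DecidableEq

instance : Fintype Corner := ⟨{.a, .b, .c, .d}, by rintro (_ | _) <;> decide⟩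

lemma card_corner : Fintype.card Corner = 4 := rfl

/-- The vertices of `K_{1,1,m,m}` for `m = 4 * p + 1`: besides the parts `{u}` and `{v}` there are
the parts `x` and `y`, each consisting of an exceptional vertex and of four vertices in each of `p`
blocks. -/
inductive Vertex (p : ℕ)
  | u
  | v
  | x₀
  | y₀
  | x (i : Fin p) (k : Corner)
  | y (i : Fin p) (k : Corner)
  deriving Fintype

namespace Vertex

variable {p : ℕ}

/-- The part of `K_{1,1,m,m}` containing a vertex. -/
def part : Vertex p → Fin 4
  | u => 0
  | v => 1
  | x₀ | x _ _ => 2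
  | y₀ | y _ _ => 3

/-- The slot of an `x`-vertex of the block `r` on the spine of the frame graph `r`. -/
def ownSlotX : Corner → Fin 16
  | .a => 2
  | .b => 12
  | .c => 4
  | .d => 9

/-- The slot of a `y`-vertex of the block `r` on the spine of the frame graph `r`. -/
def ownSlotY : Corner → Fin 16
  | .a => 7
  | .b => 11
  | .c => 13
  | .d => 15

/-- The slot shared by `x`-vertices of all blocks `i ≠ r` on the spine of the frame graph `r`. -/
def otherSlotX : Corner → Fin 16
  | .a | .b => 14
  | .c | .d => 8

/-- The slot shared by `y`-vertices of all blocks `i ≠ r` on the spine of the frame graph `r`. -/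
def otherSlotY : Corner → Fin 16
  | .a | .b => 1
  | .c | .d => 5

/-- The slot of a vertex on the spine of the frame graph `r`. -/
def frameSlot (r : Fin p) : Vertex p → Fin 16
  | u => 0
  | v => 6
  | x₀ => 10
  | y₀ => 3
  | x i k => if i = r then ownSlotX k else otherSlotX k
  | y i k => if i = r then ownSlotY k else otherSlotY k

/-- The slots of a frame graph that hold several vertices. -/
def frameStacks : Finset (Fin 16) := {1, 5, 8, 14}

/-- The vertices on the spine of the frame graph `r`, with `u` standing in for the contents of the
slots in `frameStacks`. -/
def frameSpine (r : Fin p) : Fin 16 → Vertex p :=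
  ![u, u, x r .a, y₀, x r .c, u, v, y r .a, u, x r .d, x₀, y r .b, x r .b, y r .c, u, y r .d]

/-- The pairs of slots joined on the two pages of a frame graph. -/
def framePage : Bool → List (Fin 16 × Fin 16)
  | true => [(0, 2), (0, 15), (1, 2), (2, 15), (4, 15), (5, 9), (6, 9), (7, 8), (7, 9), (9, 13),
      (9, 15), (10, 11), (10, 13), (11, 12), (14, 15)]
  | false => [(0, 12), (1, 12), (2, 3), (2, 7), (3, 4), (4, 5), (4, 6), (4, 7), (6, 7), (7, 12),
      (8, 11), (9, 11), (12, 13), (12, 15), (13, 14)]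

lemma lt_of_mem_framePage : ∀ page, ∀ e ∈ framePage page, e.1 < e.2 := by
  decide +kernel

/-- The pattern of all frame graphs: its vertices are the slots on their spine. -/
def slotGraph : SimpleGraph (Fin 16) where
  Adj s t := ∃ page, (s, t) ∈ framePage page ∨ (t, s) ∈ framePage page
  symm := ⟨fun _ _ h => h.imp fun _ => Or.symm⟩
  loopless := ⟨fun _ ⟨page, h⟩ => (lt_of_mem_framePage page _ (or_self_iff.1 h)).false⟩

instance : DecidableRel slotGraph.Adj := fun s t =>
  inferInstanceAs (Decidable (∃ page, (s, t) ∈ framePage page ∨ (t, s) ∈ framePage page))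

/-- The planar graph covering most edges within the block `r` and most edges that leave it. -/
def frameGraph (r : Fin p) : SimpleGraph (Vertex p) := slotGraph.comap (frameSlot r)

lemma stackNonCrossing_framePage (page : Bool) :
    StackNonCrossing (frameStacks : Set (Fin 16)) fun s t => (s, t) ∈ framePage page := by
  have key : ∀ page, ∀ e ∈ framePage page, ∀ e' ∈ framePage page,
      ¬ ((e.1 < e'.1 ∨ e.1 = e'.1 ∧ e.1 ∈ frameStacks) ∧
        (e'.1 < e.2 ∨ e'.1 = e.2 ∧ e'.1 ∈ frameStacks) ∧
        (e.2 < e'.2 ∨ e.2 = e'.2 ∧ e.2 ∈ frameStacks)) := by decide +kernel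
  exact fun a b c d hab hcd hac hcb hbd => key page _ hab _ hcd ⟨hac, hcb, hbd⟩

lemma frameSpine_frameSlot {r : Fin p} {s : Vertex p} (hs : frameSlot r s ∉ frameStacks) :
    frameSpine r (frameSlot r s) = s := by
  have hx (k) : otherSlotX k ∈ frameStacks := by decide +revert
  have hy (k) : otherSlotY k ∈ frameStacks := by decide +revert
  rcases s with _ | _ | _ | _ | ⟨i, k⟩ | ⟨i, k⟩ <;> try rfl
  all_goals
    obtain rfl | hir := eq_or_ne i r
    · cases k <;> simp only [frameSlot, ↓reduceIte] <;> rfl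
    · simp [frameSlot, hir, hx, hy] at hs

lemma frameSlot_mem_frameStacks {r : Fin p} {s t : Vertex p}
    (h : frameSlot r s = frameSlot r t) (hst : s ≠ t) : frameSlot r s ∈ frameStacks := by
  by_contra hs
  exact hst (by rw [← frameSpine_frameSlot hs, h, frameSpine_frameSlot (h ▸ hs)])

lemma isPlanar_frameGraph (r : Fin p) : IsPlanar (frameGraph r) := by
  refine isPlanar_comap_of_stackNonCrossing (stack := frameStacks)
    (R := fun page s t => (s, t) ∈ framePage page)
    (fun _ _ => frameSlot_mem_frameStacks) stackNonCrossing_framePage fun s t ⟨page, hst⟩ hlt => ?_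
  exact ⟨page, hst.resolve_right fun hts => (lt_of_mem_framePage page _ hts).not_gt hlt⟩

/-- The position of a vertex on the spine of the last graph. -/
def lastPos : Vertex p → ℕ
  | u => 0
  | y i .b => 4 * i + 1
  | x i .c => 4 * i + 2
  | x i .a => 4 * i + 3
  | y i .c => 4 * i + 4
  | v => 4 * p + 1
  | y i .d => 4 * p + 2 + i
  | x i .b => 5 * p + 2 + i
  | y₀ => 6 * p + 2
  | x i .d => 6 * p + 3 + i
  | x₀ => 7 * p + 3
  | y i .a => 7 * p + 4 + i

open Corner in
/-- The pairs of vertices joined on the two pages of the last graph. -/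
inductive LastPage : Bool → Vertex p → Vertex p → Prop
  | u_v : LastPage true u v
  | u_yb (i) : LastPage true u (y i b)
  | u_xc (i) : LastPage true u (x i c)
  | u_yc (i) : LastPage true u (y i c)
  | yb_xc (i) : LastPage true (y i b) (x i c)
  | xa_yc (i) : LastPage true (x i a) (y i c)
  | xc_yc (i) : LastPage true (x i c) (y i c)
  | v_x₀ : LastPage true v x₀
  | yd_x₀ (i) : LastPage true (y i d) x₀
  | xb_y₀ (i) : LastPage true (x i b) y₀
  | y₀_xd (i) : LastPage true y₀ (x i d)
  | y₀_x₀ : LastPage true y₀ x₀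
  | x₀_ya (i) : LastPage true x₀ (y i a)
  | yb_v (i) : LastPage false (y i b) v
  | xa_v (i) : LastPage false (x i a) v
  | yc_v (i) : LastPage false (y i c) v
  | yb_xa (i) : LastPage false (y i b) (x i a)
  | v_yd (i) : LastPage false v (y i d)
  | v_xb (i) : LastPage false v (x i b)
  | v_y₀ : LastPage false v y₀
  | u_y₀ : LastPage false u y₀
  | u_xd (i) : LastPage false u (x i d)
  | u_x₀ : LastPage false u x₀
  | u_ya (i) : LastPage false u (y i a)

lemma lastPos_injective : Function.Injective (lastPos (p := p)) := by
  rintro (_ | _ | _ | _ | ⟨i, _ | _⟩ | ⟨i, _ | _⟩) (_ | _ | _ | _ | ⟨j, _ | _⟩ | ⟨j, _ | _⟩) h <;>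
    simp only [lastPos] at h <;>
    first
    | omega
    | rfl
    | (obtain rfl : i = j := by omega
       rfl)

lemma lastPos_lt_of_lastPage {page : Bool} {s t : Vertex p} (h : LastPage page s t) :
    lastPos s < lastPos t := by
  cases h <;> simp only [lastPos] <;> omega

lemma nonCrossing_lastPage (page : Bool) : NonCrossing lastPos (LastPage (p := p) page) := by
  rintro a b c d (_ | _) (_ | _) <;> simp only [lastPos] <;> omega

/-- The planar graph covering the edges that are in no frame graph. -/
def lastGraph (p : ℕ) : SimpleGraph (Vertex p) where
  Adj s t := ∃ page, LastPage page s t ∨ LastPage page t s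
  symm := ⟨fun _ _ h => h.imp fun _ => Or.symm⟩
  loopless := ⟨fun _ ⟨_, h⟩ => (lastPos_lt_of_lastPage (or_self_iff.1 h)).false⟩

lemma isPlanar_lastGraph (p : ℕ) : IsPlanar (lastGraph p) :=
  IsTwoPage.isPlanar ⟨lastPos_injective, nonCrossing_lastPage, fun ⟨page, h⟩ hlt =>
    ⟨page, h.resolve_right fun h' => (lastPos_lt_of_lastPage h').not_gt hlt⟩⟩

/-- The union of all frame graphs and the last graph. -/
def cover (p : ℕ) : SimpleGraph (Vertex p) := (⨆ r, frameGraph r) ⊔ lastGraph p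

lemma hasPlanarCover_cover (p : ℕ) : HasPlanarCover (cover p) (p + 1) := by
  refine ⟨Fin.snoc (α := fun _ => SimpleGraph (Vertex p)) frameGraph (lastGraph p),
    Fin.lastCases (by simpa using isPlanar_lastGraph p)
      fun r => by simpa using isPlanar_frameGraph r,
    sup_le (iSup_le fun r => ?_) ?_⟩
  · exact le_iSup_of_le r.castSucc (by simp)
  · exact le_iSup_of_le (Fin.last p) (by simp)

lemma cover_adj_of_slotGraph_adj (r : Fin p) {s t : Vertex p}
    (h : slotGraph.Adj (frameSlot r s) (frameSlot r t)) : (cover p).Adj s t :=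
  .inl (iSup_adj.2 ⟨r, h⟩)

lemma cover_adj_of_lastPage {page : Bool} {s t : Vertex p} (h : LastPage page s t) :
    (cover p).Adj s t :=
  .inr ⟨page, .inl h⟩

lemma cover_adj_u_x (i : Fin p) (k : Corner) : (cover p).Adj u (x i k) := by
  cases k with
  | a | b => exact cover_adj_of_slotGraph_adj i (by simp only [frameSlot, ↓reduceIte]; decide)
  | c => exact cover_adj_of_lastPage (.u_xc i)
  | d => exact cover_adj_of_lastPage (.u_xd i)

lemma cover_adj_u_y (i : Fin p) (k : Corner) : (cover p).Adj u (y i k) := by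
  cases k with
  | a => exact cover_adj_of_lastPage (.u_ya i)
  | b => exact cover_adj_of_lastPage (.u_yb i)
  | c => exact cover_adj_of_lastPage (.u_yc i)
  | d => exact cover_adj_of_slotGraph_adj i (by simp only [frameSlot, ↓reduceIte]; decide)

lemma cover_adj_v_x (i : Fin p) (k : Corner) : (cover p).Adj v (x i k) := by
  cases k with
  | a => exact (cover_adj_of_lastPage (.xa_v i)).symm
  | b => exact cover_adj_of_lastPage (.v_xb i)
  | c | d => exact cover_adj_of_slotGraph_adj i (by simp only [frameSlot, ↓reduceIte]; decide)

lemma cover_adj_v_y (i : Fin p) (k : Corner) : (cover p).Adj v (y i k) := by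
  cases k with
  | a => exact cover_adj_of_slotGraph_adj i (by simp only [frameSlot, ↓reduceIte]; decide)
  | b => exact (cover_adj_of_lastPage (.yb_v i)).symm
  | c => exact (cover_adj_of_lastPage (.yc_v i)).symm
  | d => exact cover_adj_of_lastPage (.v_yd i)

lemma cover_adj_x₀_y (i : Fin p) (k : Corner) : (cover p).Adj x₀ (y i k) := by
  cases k with
  | a => exact cover_adj_of_lastPage (.x₀_ya i)
  | b | c => exact cover_adj_of_slotGraph_adj i (by simp only [frameSlot, ↓reduceIte]; decide)
  | d => exact (cover_adj_of_lastPage (.yd_x₀ i)).symm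

lemma cover_adj_x_y₀ (i : Fin p) (k : Corner) : (cover p).Adj (x i k) y₀ := by
  cases k with
  | a | c => exact cover_adj_of_slotGraph_adj i (by simp only [frameSlot, ↓reduceIte]; decide)
  | b => exact cover_adj_of_lastPage (.xb_y₀ i)
  | d => exact (cover_adj_of_lastPage (.y₀_xd i)).symm

lemma cover_adj_x_y_self (i : Fin p) (k l : Corner) : (cover p).Adj (x i k) (y i l) := by
  have hframe (h : slotGraph.Adj (ownSlotX k) (ownSlotY l)) : (cover p).Adj (x i k) (y i l) :=
    cover_adj_of_slotGraph_adj i (by simpa only [frameSlot, ↓reduceIte] using h)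
  cases k with
  | a => cases l with
    | b => exact (cover_adj_of_lastPage (.yb_xa i)).symm
    | c => exact cover_adj_of_lastPage (.xa_yc i)
    | a | d => exact hframe (by decide)
  | c => cases l with
    | b => exact (cover_adj_of_lastPage (.yb_xc i)).symm
    | c => exact cover_adj_of_lastPage (.xc_yc i)
    | a | d => exact hframe (by decide)
  | b | d => cases l <;> exact hframe (by decide)

lemma slotGraph_adj_own_other (k l : Corner) :
    slotGraph.Adj (ownSlotX k) (otherSlotY l) ∨ slotGraph.Adj (otherSlotX k) (ownSlotY l) := by
  decide +revert

lemma cover_adj_x_y {i j : Fin p} (k l : Corner) : (cover p).Adj (x i k) (y j l) := by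
  obtain rfl | hij := eq_or_ne i j
  · exact cover_adj_x_y_self i k l
  · obtain h | h := slotGraph_adj_own_other k l
    · exact cover_adj_of_slotGraph_adj i (by simpa only [frameSlot, ↓reduceIte, hij.symm] using h)
    · exact cover_adj_of_slotGraph_adj j (by simpa only [frameSlot, ↓reduceIte, hij] using h)

lemma cover_adj_of_part_lt {s t : Vertex p} (h : s.part < t.part) : (cover p).Adj s t := by
  cases s <;> cases t <;> first
    | apply_rules [cover_adj_u_x, cover_adj_u_y, cover_adj_v_x, cover_adj_v_y, cover_adj_x₀_y,
        cover_adj_x_y₀, cover_adj_x_y]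
    | exact cover_adj_of_lastPage .u_v
    | exact cover_adj_of_lastPage .u_x₀
    | exact cover_adj_of_lastPage .u_y₀
    | exact cover_adj_of_lastPage .v_x₀
    | exact cover_adj_of_lastPage .v_y₀
    | exact (cover_adj_of_lastPage .y₀_x₀).symm
    | exact absurd h (by simp [part])

lemma cover_adj_of_part_ne {s t : Vertex p} (h : s.part ≠ t.part) : (cover p).Adj s t := by
  obtain h | h := h.lt_or_gt
  · exact cover_adj_of_part_lt h
  · exact (cover_adj_of_part_lt h).symm

end Vertex
end Construction

section CompleteMultipartite

variable {α : Type} {p k : ℕ}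

namespace Vertex

/-- The map from the vertices of `K_{1,1,m,m}` to `Vertex p` that places each of the two large parts
according to `e`, where `none` stands for the exceptional vertex. -/
def ofSigma (e : α → Option (Fin p × Corner)) : (Σ i, ![Fin 1, Fin 1, α, α] i) → Vertex p
  | ⟨0, _⟩ => u
  | ⟨1, _⟩ => v
  | ⟨2, s⟩ => (e s).elim x₀ fun q => x q.1 q.2
  | ⟨3, s⟩ => (e s).elim y₀ fun q => y q.1 q.2

lemma part_ofSigma (e : α → Option (Fin p × Corner)) (s) : (ofSigma e s).part = s.1 := by
  obtain ⟨i, s⟩ := s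
  fin_cases i
  · rfl
  · rfl
  · change ((e s).elim x₀ fun q => x q.1 q.2).part = 2
    cases e s <;> rfl
  · change ((e s).elim y₀ fun q => y q.1 q.2).part = 3
    cases e s <;> rfl

lemma elim_x_injective :
    Function.Injective fun o : Option (Fin p × Corner) => o.elim x₀ fun q => x q.1 q.2 := by
  rintro (_ | _) (_ | _) h <;> simp_all [Prod.ext_iff]

lemma elim_y_injective :
    Function.Injective fun o : Option (Fin p × Corner) => o.elim y₀ fun q => y q.1 q.2 := by
  rintro (_ | _) (_ | _) h <;> simp_all [Prod.ext_iff]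

lemma ofSigma_injective {e : α → Option (Fin p × Corner)} (he : Function.Injective e) :
    Function.Injective (ofSigma e) := by
  rintro ⟨i, s⟩ ⟨j, t⟩ h
  obtain rfl : i = j := by simpa only [part_ofSigma] using congrArg part h
  refine congrArg (Sigma.mk i) ?_
  fin_cases i
  · exact Subsingleton.elim (α := Fin 1) s t
  · exact Subsingleton.elim (α := Fin 1) s t
  · exact he (elim_x_injective h)
  · exact he (elim_y_injective h)

end Vertex

lemma hasPlanarCover_completeMultipartiteGraph (e : α ↪ Option (Fin p × Corner)) :
    HasPlanarCover (completeMultipartiteGraph ![Fin 1, Fin 1, α, α]) (p + 1) :=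
  (Vertex.hasPlanarCover_cover p).of_injective_hom
    ⟨Vertex.ofSigma e, fun {s t} hst =>
      Vertex.cover_adj_of_part_ne (by rwa [Vertex.part_ofSigma, Vertex.part_ofSigma])⟩
    (Vertex.ofSigma_injective e.injective)

/-- The map witnessing `K_{m+1,m+1} ⊆ K_{1,1,m,m}`, where each singleton part is merged with one of
the large parts. -/
def sigmaOfSum : Option α ⊕ Option α → Σ i, ![Fin 1, Fin 1, α, α] i
  | .inl none => ⟨0, (0 : Fin 1)⟩
  | .inr none => ⟨1, (0 : Fin 1)⟩
  | .inl (some a) => ⟨2, a⟩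
  | .inr (some a) => ⟨3, a⟩

lemma sigmaOfSum_injective : Function.Injective (sigmaOfSum (α := α)) := by
  rintro ((_ | a) | (_ | a)) ((_ | b) | (_ | b)) h <;> cases h <;> rfl

lemma sigmaOfSum_adj {s t : Option α ⊕ Option α} (h : (completeBipartiteGraph _ _).Adj s t) :
    (completeMultipartiteGraph ![Fin 1, Fin 1, α, α]).Adj (sigmaOfSum s) (sigmaOfSum t) := by
  rcases s with (_ | _) | (_ | _) <;> rcases t with (_ | _) | (_ | _) <;>
    simp_all [sigmaOfSum]

lemma HasPlanarCover.card_add_three_le [Finite α] [Nonempty α]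
    (h : HasPlanarCover (completeMultipartiteGraph ![Fin 1, Fin 1, α, α]) k) :
    Nat.card α + 3 ≤ 4 * k := by
  have hpos : 0 < Nat.card α := Nat.card_pos
  have hbip : HasPlanarCover (completeBipartiteGraph (Option α) (Option α)) k :=
    h.of_injective_hom ⟨sigmaOfSum, sigmaOfSum_adj⟩ sigmaOfSum_injective
  have hcard := hbip.card_mul_card_add_le (by rw [Finite.card_option]; lia)
  rw [Finite.card_option] at hcard
  nlinarith

end CompleteMultipartite

theorem thickness_K11nn (n : ℕ) (hn : 1 ≤ n) :
    (thickness (completeMultipartiteGraph ![Fin 1, Fin 1, Fin n, Fin n]) : ℤ) = ⌈((n : ℚ) + 3) / 4⌉ := by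
  have : NeZero n := ⟨by lia⟩
  obtain ⟨p, hnp, hpn⟩ : ∃ p, n ≤ 4 * p + 1 ∧ 4 * p ≤ n + 2 := ⟨(n + 2) / 4, by lia, by lia⟩
  have hcard : Fintype.card (Fin n) ≤ Fintype.card (Option (Fin p × Corner)) := by
    rw [Fintype.card_fin, Fintype.card_option, Fintype.card_prod, Fintype.card_fin, card_corner]
    lia
  obtain ⟨e⟩ := Function.Embedding.nonempty_of_card_le hcard
  have hcover := hasPlanarCover_completeMultipartiteGraph e
  have hlower := hcover.hasPlanarCover_thickness.card_add_three_le
  have hupper := hcover.thickness_le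
  rw [Nat.card_fin] at hlower
  rw [eq_comm, Int.ceil_eq_iff, lt_div_iff₀ four_pos, div_le_iff₀ four_pos]
  constructor <;> norm_cast <;> lia
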